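/- arXiv:0809.4469 — 8 statements merged into one kernel-verified Lean document; each statement's English description precedes it below -/
import Mathlib

section
/- Let ρ = ρ_A ⊗ ρ_B be a product state on ℂ^M ⊗ ℂ^N, where ρ_A and ρ_B are density matrices on ℂ^M and ℂ^N respectively. Then for every N×N unitary U that is cyclic for ρ (i.e., U·ρ_B = ρ_B·U), the Fu distance vanishes: d(ρ,U) = 0. Consequently d_max(ρ) = 0. -/
/-!
A unitary `U` commuting with `ρB` satisfies `U ρB Uᴴ = ρB U Uᴴ = ρB`, so `I ⊗ U` fixes the product
state `ρA ⊗ ρB` (`rhoF_kronecker`) and the Fu distance is that of a state to itself. Since `ρA` has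
trace one, the reduced state of `ρA ⊗ ρB` is `ρB` (`ptrA_kronecker`), so the set of distances defining
`dmax` consists of zeros; it is nonempty because the identity is cyclic, hence it is exactly `{0}`.
-/

noncomputable section
open Matrix Kronecker ComplexOrder

/-- The state after applying `I_M ⊗ U` to `ρ`. -/
def rhoF {M N : ℕ} (ρ : Matrix (Fin M × Fin N) (Fin M × Fin N) ℂ)
    (U : Matrix (Fin N) (Fin N) ℂ) : Matrix (Fin M × Fin N) (Fin M × Fin N) ℂ :=
  ((1 : Matrix (Fin M) (Fin M) ℂ) ⊗ₖ U) * ρ * ((1 : Matrix (Fin M) (Fin M) ℂ) ⊗ₖ U)ᴴ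

/-- The Fu distance `d(ρ,U) = (1/√2) ‖ρ - ρ_f‖_F`, with Frobenius norm
`‖A‖_F = √(Tr(AᴴA))`. -/
def fuDist {M N : ℕ} (ρ : Matrix (Fin M × Fin N) (Fin M × Fin N) ℂ)
    (U : Matrix (Fin N) (Fin N) ℂ) : ℝ :=
  (1 / Real.sqrt 2) * Real.sqrt (((ρ - rhoF ρ U)ᴴ * (ρ - rhoF ρ U)).trace.re)

/-- The reduced state `ρ_B = Tr_A ρ`. -/
def ptrA {M N : ℕ} (ρ : Matrix (Fin M × Fin N) (Fin M × Fin N) ℂ) :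
    Matrix (Fin N) (Fin N) ℂ :=
  Matrix.of fun k l => ∑ i, ρ (i, k) (i, l)

/-- `d_max(ρ)`: supremum of the Fu distance over all cyclic unitaries on subsystem B. -/
def dmax {M N : ℕ} (ρ : Matrix (Fin M × Fin N) (Fin M × Fin N) ℂ) : ℝ :=
  sSup {x : ℝ | ∃ U : Matrix (Fin N) (Fin N) ℂ,
    U ∈ Matrix.unitaryGroup (Fin N) ℂ ∧ U * ptrA ρ = ptrA ρ * U ∧ x = fuDist ρ U}

theorem rhoF_kronecker {M N : ℕ} (ρA : Matrix (Fin M) (Fin M) ℂ)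
    (ρB U : Matrix (Fin N) (Fin N) ℂ) (hU : U ∈ Matrix.unitaryGroup (Fin N) ℂ)
    (h : U * ρB = ρB * U) : rhoF (ρA ⊗ₖ ρB) U = ρA ⊗ₖ ρB := by
  have hU' : U * Uᴴ = 1 := Matrix.mem_unitaryGroup_iff.mp hU
  rw [rhoF, Matrix.conjTranspose_kronecker, ← Matrix.mul_kronecker_mul,
    ← Matrix.mul_kronecker_mul, h, Matrix.mul_assoc ρB, hU']
  simp

theorem fuDist_kronecker {M N : ℕ} (ρA : Matrix (Fin M) (Fin M) ℂ)
    (ρB U : Matrix (Fin N) (Fin N) ℂ) (hU : U ∈ Matrix.unitaryGroup (Fin N) ℂ)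
    (h : U * ρB = ρB * U) : fuDist (ρA ⊗ₖ ρB) U = 0 := by
  simp [fuDist, rhoF_kronecker ρA ρB U hU h]

theorem ptrA_kronecker {M N : ℕ} (ρA : Matrix (Fin M) (Fin M) ℂ)
    (ρB : Matrix (Fin N) (Fin N) ℂ) (hAtr : ρA.trace = 1) : ptrA (ρA ⊗ₖ ρB) = ρB := by
  ext k l
  have h : ∑ i, ρA i i = 1 := hAtr
  simp [ptrA, Matrix.kroneckerMap_apply, ← Finset.sum_mul, h]

theorem stmt1 {M N : ℕ}
    (ρA : Matrix (Fin M) (Fin M) ℂ) (ρB : Matrix (Fin N) (Fin N) ℂ)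
    (hA : ρA.PosSemidef) (hAtr : ρA.trace = 1)
    (hB : ρB.PosSemidef) (hBtr : ρB.trace = 1) :
    (∀ U : Matrix (Fin N) (Fin N) ℂ, U ∈ Matrix.unitaryGroup (Fin N) ℂ →
      U * ρB = ρB * U → fuDist (ρA ⊗ₖ ρB) U = 0) ∧
    dmax (ρA ⊗ₖ ρB) = 0 := by
  refine ⟨fuDist_kronecker ρA ρB, ?_⟩
  have hset : {x : ℝ | ∃ U : Matrix (Fin N) (Fin N) ℂ,
      U ∈ Matrix.unitaryGroup (Fin N) ℂ ∧ U * ptrA (ρA ⊗ₖ ρB) = ptrA (ρA ⊗ₖ ρB) * U ∧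
        x = fuDist (ρA ⊗ₖ ρB) U} = {0} := by
    rw [ptrA_kronecker ρA ρB hAtr]
    ext x
    constructor
    · rintro ⟨U, hU, h, rfl⟩
      exact fuDist_kronecker ρA ρB U hU h
    · rintro rfl
      have h1 : (1 : Matrix (Fin N) (Fin N) ℂ) * ρB = ρB * 1 := by simp
      exact ⟨1, one_mem _, h1, (fuDist_kronecker ρA ρB 1 (one_mem _) h1).symm⟩
  rw [dmax, hset, csSup_singleton]
end
end

section
/- Let ρ be a separable (classically correlated) state on ℂ^M ⊗ ℂ^N, i.e., ρ = Σ_{k=1}^n p_k |a_k⟩⟨a_k| ⊗ |b_k⟩⟨b_k| with p_k > 0, Σ_k p_k = 1, and unit vectors |a_k⟩ ∈ ℂ^M, |b_k⟩ ∈ ℂ^N. Then d_max(ρ) ≤ √( 2(M−1)(N−1) / (MN) ). -/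
/-!
Put `P_k = |a_k⟩⟨a_k|`, `Q_k = |b_k⟩⟨b_k|` and `C_k = Q_k - U Q_k Uᴴ`. Then
`ρ - ρ_f = ∑ p_k P_k ⊗ C_k`, and cyclicity of `U` says `∑ p_k C_k = 0`, because
`ρ_B = ∑ p_k Q_k`. Hence `P_k` may be replaced by its traceless part:
`ρ - ρ_f = ∑ p_k (P_k - 1/M) ⊗ C_k` (`sub_rhoF_eq`).

The Frobenius norm of the traceless part of a pure state on `ℂ^d` is `√(1 - 1/d)`
(`norm_pure_sub`). The scalar part of `Q_k` is invariant under conjugation, so `C_k` is a difference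
of two matrices of norm `√(1 - 1/N)` and `‖C_k‖ ≤ 2 √(1 - 1/N)` (`norm_sub_conj_le`). Since the
Frobenius norm is multiplicative on Kronecker products, convexity gives
`‖ρ - ρ_f‖ ≤ 2 √(1 - 1/M) √(1 - 1/N)`, and dividing by `√2` gives the bound.
-/

noncomputable section
open Matrix Kronecker ComplexOrder

section FuBound

attribute [local instance] Matrix.frobeniusNormedAddCommGroup Matrix.frobeniusNormedSpace

lemma frob_sq {m : Type*} [Fintype m] (X : Matrix m m ℂ) :
    ‖X‖ ^ 2 = (Xᴴ * X).trace.re := by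
  rw [Matrix.frobenius_norm_def, ← Real.sqrt_eq_rpow, Real.sq_sqrt (by positivity),
    Finset.sum_comm]
  simp [Matrix.trace, Matrix.mul_apply, Complex.normSq_apply, Complex.sq_norm]

lemma trace_conjTranspose_mul_self {m : Type*} [Fintype m] (X : Matrix m m ℂ) :
    (Xᴴ * X).trace = ((‖X‖ ^ 2 : ℝ) : ℂ) := by
  have h : star (Xᴴ * X).trace = (Xᴴ * X).trace := by
    rw [← Matrix.trace_conjTranspose]; simp
  rw [frob_sq]
  exact (Complex.conj_eq_iff_re.mp h).symm

lemma frob_kronecker {m n : Type*} [Fintype m] [Fintype n]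
    (A : Matrix m m ℂ) (B : Matrix n n ℂ) : ‖A ⊗ₖ B‖ = ‖A‖ * ‖B‖ := by
  refine (sq_eq_sq₀ (norm_nonneg _) (by positivity)).mp ?_
  rw [frob_sq, Matrix.conjTranspose_kronecker, ← Matrix.mul_kronecker_mul,
    Matrix.trace_kronecker, trace_conjTranspose_mul_self, trace_conjTranspose_mul_self,
    ← Complex.ofReal_mul, Complex.ofReal_re, mul_pow]

/-- The Frobenius norm is invariant under unitary conjugation. -/
lemma frob_conj {m : Type*} [Fintype m] [DecidableEq m] (U B : Matrix m m ℂ)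
    (hU : U ∈ Matrix.unitaryGroup m ℂ) : ‖U * B * Uᴴ‖ = ‖B‖ := by
  refine (sq_eq_sq₀ (norm_nonneg _) (norm_nonneg _)).mp ?_
  have h : Uᴴ * U = 1 := Matrix.mem_unitaryGroup_iff'.mp hU
  rw [frob_sq, frob_sq]
  have e : (U * B * Uᴴ)ᴴ * (U * B * Uᴴ) = U * (Bᴴ * B * Uᴴ) := by
    simp only [Matrix.conjTranspose_mul, Matrix.conjTranspose_conjTranspose, Matrix.mul_assoc]
    rw [← Matrix.mul_assoc Uᴴ U, h, Matrix.one_mul]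
  rw [e, Matrix.trace_mul_comm, Matrix.mul_assoc, h, Matrix.mul_one]

/-- The projector `|v⟩⟨v|`. -/
abbrev proj {d : ℕ} (v : Fin d → ℂ) : Matrix (Fin d) (Fin d) ℂ :=
  Matrix.vecMulVec v (star v)

lemma star_dot_self {d : ℕ} (v : Fin d → ℂ) (hv : ∑ i, Complex.normSq (v i) = 1) :
    star v ⬝ᵥ v = 1 := by
  simp only [dotProduct, Pi.star_apply, RCLike.star_def, ← Complex.normSq_eq_conj_mul_self]
  exact_mod_cast hv

lemma trace_proj {d : ℕ} (v : Fin d → ℂ) (hv : ∑ i, Complex.normSq (v i) = 1) :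
    (proj v).trace = 1 := by
  rw [Matrix.trace_vecMulVec, dotProduct_comm, star_dot_self v hv]

/-- From `P² = P` and `Tr P = 1`, `Tr (P - 1/d)² = 1 - 2/d + d/d²`. -/
lemma norm_pure_sub {d : ℕ} (hd : 0 < d) (v : Fin d → ℂ)
    (hv : ∑ i, Complex.normSq (v i) = 1) :
    ‖proj v - ((d : ℂ)⁻¹) • (1 : Matrix (Fin d) (Fin d) ℂ)‖ = √(1 - (d : ℝ)⁻¹) := by
  have hd' : (d : ℂ) ≠ 0 := by exact_mod_cast hd.ne'
  rw [eq_comm, ← Real.sqrt_sq (norm_nonneg _), frob_sq]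
  congr 1
  have hP : (proj v)ᴴ = proj v := by simp [proj, Matrix.conjTranspose_vecMulVec]
  have hPP : proj v * proj v = proj v := by
    simp [proj, Matrix.vecMulVec_mul_vecMulVec, star_dot_self v hv]
  have e : ((proj v - ((d : ℂ)⁻¹) • (1 : Matrix (Fin d) (Fin d) ℂ))ᴴ *
      (proj v - ((d : ℂ)⁻¹) • (1 : Matrix (Fin d) (Fin d) ℂ))).trace
      = ((1 - (d : ℝ)⁻¹ : ℝ) : ℂ) := by
    simp only [Matrix.conjTranspose_sub, Matrix.conjTranspose_smul, hP, Matrix.conjTranspose_one,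
      Matrix.sub_mul, Matrix.mul_sub, hPP, Matrix.smul_mul, Matrix.mul_smul, Matrix.one_mul,
      Matrix.mul_one, Matrix.trace_sub, Matrix.trace_smul, trace_proj v hv, Matrix.trace_one]
    simp [hd']
  rw [e, Complex.ofReal_re]

lemma norm_sub_conj_le {d : ℕ} (hd : 0 < d) (v : Fin d → ℂ)
    (hv : ∑ i, Complex.normSq (v i) = 1) (U : Matrix (Fin d) (Fin d) ℂ)
    (hU : U ∈ Matrix.unitaryGroup (Fin d) ℂ) :
    ‖proj v - U * proj v * Uᴴ‖ ≤ 2 * √(1 - (d : ℝ)⁻¹) := by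
  have h : U * Uᴴ = 1 := Matrix.mem_unitaryGroup_iff.mp hU
  set B := proj v - ((d : ℂ)⁻¹) • (1 : Matrix (Fin d) (Fin d) ℂ) with hB
  have e : proj v - U * proj v * Uᴴ = B - U * B * Uᴴ := by
    simp [hB, Matrix.mul_sub, Matrix.sub_mul, h]
  rw [e, two_mul]
  refine (norm_sub_le _ _).trans (le_of_eq ?_)
  rw [frob_conj U B hU, hB, norm_pure_sub hd v hv]

/-- For a cyclic unitary only the correlations between the traceless parts contribute to
`ρ - ρ_f`. -/
lemma sub_rhoF_eq {M N n : ℕ} (p : Fin n → ℝ) (P : Fin n → Matrix (Fin M) (Fin M) ℂ)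
    (Q : Fin n → Matrix (Fin N) (Fin N) ℂ) (hP : ∀ k, (P k).trace = 1)
    (U : Matrix (Fin N) (Fin N) ℂ) (hU : U ∈ Matrix.unitaryGroup (Fin N) ℂ)
    (hc : U * ptrA (∑ k, p k • (P k ⊗ₖ Q k)) = ptrA (∑ k, p k • (P k ⊗ₖ Q k)) * U) (c : ℂ) :
    (∑ k, p k • (P k ⊗ₖ Q k)) - rhoF (∑ k, p k • (P k ⊗ₖ Q k)) U =
      ∑ k, p k • ((P k - c • (1 : Matrix (Fin M) (Fin M) ℂ)) ⊗ₖ (Q k - U * Q k * Uᴴ)) := by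
  have h : U * Uᴴ = 1 := Matrix.mem_unitaryGroup_iff.mp hU
  have hptr : ptrA (∑ k, p k • (P k ⊗ₖ Q k)) = ∑ k, p k • Q k := by
    ext i j
    simp only [ptrA, Matrix.of_apply, Matrix.sum_apply, Matrix.smul_apply,
      Matrix.kroneckerMap_apply]
    rw [Finset.sum_comm]
    refine Finset.sum_congr rfl fun k _ => ?_
    rw [← Finset.smul_sum, ← Finset.sum_mul]
    have := hP k
    simp only [Matrix.trace, Matrix.diag_apply] at this
    rw [this, one_mul]
  have hzero : ∑ k, p k • (Q k - U * Q k * Uᴴ) = 0 := by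
    rw [hptr] at hc
    have h2 : ∑ k, p k • (U * Q k * Uᴴ) = U * (∑ k, p k • Q k) * Uᴴ := by
      simp [Finset.mul_sum, Finset.sum_mul]
    simp only [smul_sub, Finset.sum_sub_distrib]
    rw [h2, hc, Matrix.mul_assoc, h, Matrix.mul_one, sub_self]
  have hscalar : ∑ k, p k • ((c • (1 : Matrix (Fin M) (Fin M) ℂ)) ⊗ₖ (Q k - U * Q k * Uᴴ)) = 0 := by
    have h3 : ∑ k, p k • ((c • (1 : Matrix (Fin M) (Fin M) ℂ)) ⊗ₖ (Q k - U * Q k * Uᴴ)) =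
        (c • (1 : Matrix (Fin M) (Fin M) ℂ)) ⊗ₖ ∑ k, p k • (Q k - U * Q k * Uᴴ) := by
      ext i j
      simp only [Matrix.sum_apply, Matrix.smul_apply (p _), Matrix.kroneckerMap_apply,
        Finset.mul_sum, mul_smul_comm]
    rw [h3, hzero, Matrix.kronecker_zero]
  have hrho : rhoF (∑ k, p k • (P k ⊗ₖ Q k)) U = ∑ k, p k • (P k ⊗ₖ (U * Q k * Uᴴ)) := by
    simp only [rhoF, Finset.mul_sum, Finset.sum_mul, Matrix.mul_smul, Matrix.smul_mul,
      Matrix.conjTranspose_kronecker, Matrix.conjTranspose_one, ← Matrix.mul_kronecker_mul,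
      Matrix.one_mul, Matrix.mul_one]
  rw [hrho, ← sub_zero (_ - _), ← hscalar, ← Finset.sum_sub_distrib, ← Finset.sum_sub_distrib]
  refine Finset.sum_congr rfl fun k _ => ?_
  rw [← smul_sub, ← smul_sub]
  congr 1
  ext i j
  simp only [Matrix.sub_apply, Matrix.kroneckerMap_apply]
  ring

lemma fuDist_eq {M N : ℕ} (ρ : Matrix (Fin M × Fin N) (Fin M × Fin N) ℂ)
    (U : Matrix (Fin N) (Fin N) ℂ) : fuDist ρ U = (1 / √2) * ‖ρ - rhoF ρ U‖ := by
  rw [fuDist, ← frob_sq, Real.sqrt_sq (norm_nonneg _)]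

lemma fuDist_le {M N n : ℕ} (hM : 0 < M) (hN : 0 < N)
    (p : Fin n → ℝ) (hp : ∀ k, 0 < p k) (hpsum : ∑ k, p k = 1)
    (a : Fin n → Fin M → ℂ) (b : Fin n → Fin N → ℂ)
    (ha : ∀ k, ∑ i, Complex.normSq (a k i) = 1)
    (hb : ∀ k, ∑ i, Complex.normSq (b k i) = 1)
    (U : Matrix (Fin N) (Fin N) ℂ) (hU : U ∈ Matrix.unitaryGroup (Fin N) ℂ)
    (hc : U * ptrA (∑ k, p k • (proj (a k) ⊗ₖ proj (b k))) =
      ptrA (∑ k, p k • (proj (a k) ⊗ₖ proj (b k))) * U) :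
    fuDist (∑ k, p k • (proj (a k) ⊗ₖ proj (b k))) U ≤
      √(2 * ((M : ℝ) - 1) * ((N : ℝ) - 1) / ((M : ℝ) * (N : ℝ))) := by
  have hM1 : (1 : ℝ) ≤ M := by exact_mod_cast hM
  have hN1 : (1 : ℝ) ≤ N := by exact_mod_cast hN
  have hD : ‖(∑ k, p k • (proj (a k) ⊗ₖ proj (b k))) -
      rhoF (∑ k, p k • (proj (a k) ⊗ₖ proj (b k))) U‖ ≤
      √(1 - (M : ℝ)⁻¹) * (2 * √(1 - (N : ℝ)⁻¹)) := by
    rw [sub_rhoF_eq p _ _ (fun k => trace_proj _ (ha k)) U hU hc (M : ℂ)⁻¹]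
    calc _ ≤ ∑ k, p k * (√(1 - (M : ℝ)⁻¹) * (2 * √(1 - (N : ℝ)⁻¹))) := by
          refine norm_sum_le_of_le _ fun k _ => ?_
          rw [norm_smul, Real.norm_of_nonneg (hp k).le, frob_kronecker, norm_pure_sub hM _ (ha k)]
          have := norm_sub_conj_le hN _ (hb k) U hU
          have := (hp k).le
          gcongr
      _ = _ := by rw [← Finset.sum_mul, hpsum, one_mul]
  rw [fuDist_eq]
  refine (mul_le_mul_of_nonneg_left hD (by positivity)).trans (le_of_eq ?_)
  have e : 2 * ((M : ℝ) - 1) * ((N : ℝ) - 1) / ((M : ℝ) * (N : ℝ)) =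
      2 * ((1 - (M : ℝ)⁻¹) * (1 - (N : ℝ)⁻¹)) := by
    field_simp
  have hM2 : 0 ≤ 1 - (M : ℝ)⁻¹ := sub_nonneg.mpr (inv_le_one_of_one_le₀ hM1)
  rw [e, Real.sqrt_mul (by norm_num), Real.sqrt_mul hM2]
  have h2 : 1 / √2 * 2 = √2 := by
    rw [one_div_mul_eq_div, Real.div_sqrt]
  linear_combination (√(1 - (M : ℝ)⁻¹) * √(1 - (N : ℝ)⁻¹)) * h2

end FuBound

theorem stmt2 {M N n : ℕ} (hM : 0 < M) (hN : 0 < N) (hn : 1 ≤ n)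
    (p : Fin n → ℝ) (hp : ∀ k, 0 < p k) (hpsum : ∑ k, p k = 1)
    (a : Fin n → Fin M → ℂ) (b : Fin n → Fin N → ℂ)
    (ha : ∀ k, ∑ i, Complex.normSq (a k i) = 1)
    (hb : ∀ k, ∑ i, Complex.normSq (b k i) = 1) :
    dmax (∑ k, p k •
        (Matrix.vecMulVec (a k) (star (a k)) ⊗ₖ Matrix.vecMulVec (b k) (star (b k)))) ≤
      Real.sqrt (2 * ((M : ℝ) - 1) * ((N : ℝ) - 1) / ((M : ℝ) * (N : ℝ))) := by
  refine Real.sSup_le ?_ (Real.sqrt_nonneg _)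
  rintro x ⟨U, hU, hc, rfl⟩
  exact fuDist_le hM hN p hp hpsum a b ha hb U hU hc
end
end

section
/- Let M ≥ N ≥ 1, let a_0,…,a_{N−1} be nonnegative reals with Σ_k a_k² = 1, let |ψ⟩ = Σ_{k=0}^{N−1} a_k |k⟩_A ⊗ |k⟩_B ∈ ℂ^M ⊗ ℂ^N, let ρ = ε·|ψ⟩⟨ψ| + ((1−ε)/(MN))·I_{MN} with 0 < ε ≤ 1, and let a_m = max_k a_k. Then d_max(ρ) = ε if a_m² ≤ 1/2, and d_max(ρ) = 2ε·a_m·√(1 − a_m²) if a_m² > 1/2; moreover the supremum defining d_max(ρ) is attained by a diagonal cyclic unitary. -/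
/-!
Write `p k = a k ^ 2`. Up to the multiple of the identity, which `I ⊗ U` fixes, `ρ` is `ε` times a
rank-one projection, so `d(ρ,U) = ε √(1 - |Σ p k · U k k|²)` (`fuDist_pseudo`). The problem is thus
to minimise `|Σ p k · U k k|` over unitaries commuting with the diagonal matrix `ρ_B`, whose
entries are `ε p k + (1-ε)/N` (`ptrA_pseudo`).

If every `p k ≤ 1/2`, the numbers `p k` are the side lengths of a closed polygon
(`exists_polygon`): there are unit complex `u k` with `Σ p k · u k = 0`, and `U = diag u`
gives the trivial upper bound `ε`. If some `p m > 1/2`, then `ε p m + (1-ε)/N` is a simple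
eigenvalue of `ρ_B`, so a cyclic `U` has `|U m m| = 1`; as the other diagonal entries have modulus
at most one, `|Σ p k · U k k| ≥ p m - (1 - p m)`, with equality for the diagonal unitary equal to
`1` at `m` and `-1` elsewhere.
-/

noncomputable section
open Matrix Kronecker ComplexOrder

/-- The pure state `|ψ⟩ = Σ_k a_k |k⟩_A ⊗ |k⟩_B` (Schmidt form in the standard bases,
valid when `N ≤ M`). -/
def psiVec {M N : ℕ} (a : Fin N → ℝ) : Fin M × Fin N → ℂ :=
  fun q => if (q.1 : ℕ) = (q.2 : ℕ) then (a q.2 : ℂ) else 0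

/-- The pseudopure state `ρ = ε |ψ⟩⟨ψ| + ((1-ε)/(MN)) I`. -/
def pseudo (M N : ℕ) (a : Fin N → ℝ) (ε : ℝ) :
    Matrix (Fin M × Fin N) (Fin M × Fin N) ℂ :=
  ε • Matrix.vecMulVec (psiVec a) (star (psiVec a)) + ((1 - ε) / ((M : ℝ) * N)) • 1

/-! ### Closed polygons in the complex plane -/

section Polygon

/-- Three lengths satisfying the triangle inequalities close up to a triangle. -/
theorem exists_triangle {t q r : ℝ}
    (h1 : |t - q| ≤ r) (h2 : r ≤ t + q) :
    ∃ u v : ℂ, ‖u‖ = 1 ∧ ‖v‖ = 1 ∧ (t : ℂ) * u + q * v = r := by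
  -- `‖t + q e^{iθ}‖` takes all values between `|t - q|` and `t + q`.
  have hcont : Continuous fun θ : ℝ => ‖(t : ℂ) + q * Complex.exp (θ * Complex.I)‖ := by
    fun_prop
  obtain ⟨θ, hθ⟩ : r ∈ Set.range fun θ : ℝ => ‖(t : ℂ) + q * Complex.exp (θ * Complex.I)‖ := by
    apply mem_range_of_exists_le_of_exists_ge hcont
    · refine ⟨Real.pi, ?_⟩
      have : (t : ℂ) + q * Complex.exp (Real.pi * Complex.I) = ((t - q : ℝ) : ℂ) := by
        rw [Complex.exp_pi_mul_I]; push_cast; ring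
      simp only [this, Complex.norm_real, Real.norm_eq_abs]
      exact h1
    · refine ⟨0, ?_⟩
      have : (t : ℂ) + q * Complex.exp ((0 : ℝ) * Complex.I) = ((t + q : ℝ) : ℂ) := by
        simp
      simp only [this, Complex.norm_real, Real.norm_eq_abs]
      exact h2.trans (le_abs_self _)
  simp only at hθ
  set e := Complex.exp (θ * Complex.I) with he
  have hen : ‖e‖ = 1 := Complex.norm_exp_ofReal_mul_I θ
  -- Rotate the sum of length `r` onto the positive real axis.
  set z := (t : ℂ) + q * e with hz
  set w := Complex.exp (-(z.arg : ℂ) * Complex.I) with hw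
  have hwn : ‖w‖ = 1 := by
    have := Complex.norm_exp_ofReal_mul_I (-z.arg)
    rwa [Complex.ofReal_neg] at this
  refine ⟨w, e * w, hwn, by rw [norm_mul, hen, hwn, one_mul], ?_⟩
  have h3 : z * w = r := by
    rw [← hθ]
    conv_lhs => rw [← Complex.norm_mul_exp_arg_mul_I z]
    rw [mul_assoc, hw, ← Complex.exp_add]
    simp
  rw [← h3, hz]; ring

/-- Polygon closing with one extra side `r` kept on the positive real axis; the extra side makes
the statement amenable to induction, each step gluing a triangle along a diagonal. -/
theorem exists_polygon {ι : Type*} [DecidableEq ι] (p : ι → ℝ) (hp : ∀ k, 0 ≤ p k)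
    (s : Finset ι) : ∀ r : ℝ, 0 ≤ r → r ≤ ∑ k ∈ s, p k →
    (∀ k ∈ s, 2 * p k - ∑ k ∈ s, p k ≤ r) →
    ∃ u : ι → ℂ, (∀ k, ‖u k‖ = 1) ∧ ∑ k ∈ s, (p k : ℂ) * u k = r := by
  induction s using Finset.induction_on with
  | empty =>
    intro r h0 h1 _
    refine ⟨fun _ => 1, by simp, ?_⟩
    have : r = 0 := le_antisymm (by simpa using h1) h0
    simp [this]
  | insert b s hb ih =>
    intro r h0 h1 h2
    rw [Finset.sum_insert hb] at h1 h2
    set S := ∑ k ∈ s, p k with hS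
    have hS0 : 0 ≤ S := Finset.sum_nonneg fun k _ => hp k
    have hq := hp b
    have hb2 := h2 b (Finset.mem_insert_self _ _)
    -- The longest admissible diagonal satisfies all the required inequalities.
    obtain ⟨u, hu, hsum⟩ := ih (min (p b + r) S) (le_min (by linarith) hS0) (min_le_right _ _)
      (by
        intro k hk
        have h3 := h2 k (Finset.mem_insert_of_mem hk)
        have h4 : p k ≤ S := Finset.single_le_sum (fun k _ => hp k) hk
        exact le_min (by linarith) (by linarith))
    obtain ⟨x, y, hx, hy, hxy⟩ := exists_triangle (t := min (p b + r) S) (q := p b) (r := r)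
      (by
        rw [abs_le]
        constructor
        · have : p b - r ≤ min (p b + r) S := le_min (by linarith) (by linarith)
          linarith
        · have := min_le_left (p b + r) S
          linarith)
      (by
        have : r - p b ≤ min (p b + r) S := le_min (by linarith) (by linarith)
        linarith)
    refine ⟨fun k => if k = b then y else u k * x, ?_, ?_⟩
    · intro k
      by_cases hk : k = b
      · simp [hk, hy]
      · simp [hk, hu, hx]
    · rw [Finset.sum_insert hb]
      have : ∑ k ∈ s, (p k : ℂ) * (if k = b then y else u k * x)
          = (∑ k ∈ s, (p k : ℂ) * u k) * x := by
        rw [Finset.sum_mul]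
        refine Finset.sum_congr rfl fun k hk => ?_
        rw [if_neg (by rintro rfl; exact hb hk)]
        ring
      simp only [if_true]
      rw [this, hsum, ← hxy]; ring

end Polygon

/-! ### The Fu distance and the reduced state of a pseudopure state -/

section State

variable {M N : ℕ}

/-- Collapses the sum over subsystem A against the Schmidt support `i = k`; `N ≤ M` ensures that
`k` is an index of A. -/
theorem sum_val_eq (hNM : N ≤ M) (k : Fin N) (f : Fin M → ℂ) :
    (∑ i : Fin M, if (i : ℕ) = (k : ℕ) then f i else 0) = f (Fin.castLE hNM k) := by
  rw [Finset.sum_eq_single (Fin.castLE hNM k)]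
  · simp
  · intro i _ hi
    rw [if_neg]
    intro h
    exact hi (Fin.ext (by simpa using h))
  · simp

/-- `⟨ψ|(I ⊗ U)|ψ⟩ = Σ_k a_k² U_kk`. -/
theorem psiVec_overlap (hNM : N ≤ M) (a : Fin N → ℝ) (U : Matrix (Fin N) (Fin N) ℂ) :
    star (psiVec (M := M) a) ⬝ᵥ (((1 : Matrix (Fin M) (Fin M) ℂ) ⊗ₖ U) *ᵥ psiVec a)
      = ∑ k, ((a k ^ 2 : ℝ) : ℂ) * U k k := by
  have hmul : ∀ i k, (((1 : Matrix (Fin M) (Fin M) ℂ) ⊗ₖ U) *ᵥ psiVec a) (i, k)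
      = ∑ l, U k l * psiVec a (i, l) := by
    intro i k
    simp only [Matrix.mulVec, dotProduct, Fintype.sum_prod_type, Matrix.kroneckerMap_apply,
      Matrix.one_apply]
    rw [Finset.sum_eq_single i]
    · simp
    · intro j _ hj
      simp [hj.symm]
    · simp
  simp only [dotProduct, Fintype.sum_prod_type, hmul]
  rw [Finset.sum_comm]
  refine Finset.sum_congr rfl fun k _ => ?_
  have : ∀ i : Fin M, star (psiVec (M := M) a) (i, k) * ∑ l, U k l * psiVec a (i, l)
      = if (i : ℕ) = (k : ℕ) then (a k : ℂ) * ∑ l, U k l * psiVec a (i, l) else 0 := by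
    intro i
    simp only [Pi.star_apply, psiVec]
    split_ifs <;> simp
  simp only [this]
  rw [sum_val_eq hNM k fun i => (a k : ℂ) * ∑ l, U k l * psiVec a (i, l),
    Finset.sum_eq_single k]
  · simp [psiVec]; ring
  · intro l _ hl
    have : (k : ℕ) ≠ l := fun h => hl (Fin.ext h.symm)
    simp [psiVec, this]
  · simp

theorem psiVec_unit (hNM : N ≤ M) (a : Fin N → ℝ) (ha1 : ∑ k, a k ^ 2 = 1) :
    star (psiVec (M := M) a) ⬝ᵥ psiVec a = 1 := by
  have := psiVec_overlap (M := M) hNM a 1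
  simp only [Matrix.one_kronecker_one, Matrix.one_mulVec, Matrix.one_apply_eq, mul_one] at this
  rw [this, ← Complex.ofReal_sum, ha1, Complex.ofReal_one]

/-- `‖vv† - ww†‖² = 2 (1 - |⟨v|w⟩|²)` for unit vectors, scaled by `ε²`. -/
theorem trace_proj_diff {ι : Type*} [Fintype ι] (v w : ι → ℂ)
    (hv : star v ⬝ᵥ v = 1) (hw : star w ⬝ᵥ w = 1) (ε : ℝ) :
    (((ε • (vecMulVec v (star v) - vecMulVec w (star w)))ᴴ *
      (ε • (vecMulVec v (star v) - vecMulVec w (star w)))).trace).re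
      = 2 * ε ^ 2 * (1 - ‖star v ⬝ᵥ w‖ ^ 2) := by
  have hs : star w ⬝ᵥ v = star (star v ⬝ᵥ w) := by
    rw [Matrix.star_dotProduct]
  have hH : ∀ x : ι → ℂ, (vecMulVec x (star x))ᴴ = vecMulVec x (star x) := by
    intro x; rw [Matrix.conjTranspose_vecMulVec, star_star]
  have ht : ∀ x y : ι → ℂ, (vecMulVec x (star x) * vecMulVec y (star y)).trace
      = (star x ⬝ᵥ y) * (star y ⬝ᵥ x) := by
    intro x y
    rw [Matrix.vecMulVec_mul_vecMulVec, Matrix.trace_vecMulVec, dotProduct_smul, smul_eq_mul,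
      dotProduct_comm x]
  simp only [Matrix.conjTranspose_smul, Matrix.conjTranspose_sub, hH, star_trivial,
    Matrix.smul_mul, Matrix.mul_smul, Matrix.trace_smul, sub_mul, mul_sub, Matrix.trace_sub, ht,
    hv, hw, hs]
  have h1 : (star v ⬝ᵥ w) * star (star v ⬝ᵥ w) = ((‖star v ⬝ᵥ w‖ ^ 2 : ℝ) : ℂ) := by
    rw [Complex.star_def, Complex.mul_conj, Complex.normSq_eq_norm_sq]
  rw [mul_comm (star (star v ⬝ᵥ w)), h1]
  simp only [Complex.real_smul, Complex.mul_re, Complex.sub_re, Complex.ofReal_re,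
    Complex.ofReal_im, Complex.one_re, Complex.mul_im, Complex.sub_im, Complex.one_im]
  ring

theorem kron_unitary {U : Matrix (Fin N) (Fin N) ℂ} (hU : U ∈ Matrix.unitaryGroup (Fin N) ℂ) :
    ((1 : Matrix (Fin M) (Fin M) ℂ) ⊗ₖ U) ∈ Matrix.unitaryGroup (Fin M × Fin N) ℂ :=
  Matrix.kronecker_mem_unitary (one_mem _) hU

/-- `d(ρ,U) = ε √(1 - |⟨ψ|(I ⊗ U)|ψ⟩|²)`: the multiple of the identity in `ρ` cancels. -/
theorem fuDist_pseudo (hNM : N ≤ M) (a : Fin N → ℝ) (ha1 : ∑ k, a k ^ 2 = 1)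
    {ε : ℝ} (hε0 : 0 < ε) {U : Matrix (Fin N) (Fin N) ℂ}
    (hU : U ∈ Matrix.unitaryGroup (Fin N) ℂ) :
    fuDist (pseudo M N a ε) U
      = ε * Real.sqrt (1 - ‖∑ k, ((a k ^ 2 : ℝ) : ℂ) * U k k‖ ^ 2) := by
  rw [← psiVec_overlap (M := M) hNM]
  have hK := kron_unitary (M := M) hU
  unfold fuDist rhoF
  set K := (1 : Matrix (Fin M) (Fin M) ℂ) ⊗ₖ U with hKdef
  set v := psiVec (M := M) a with hv
  have hK1 : K * Kᴴ = 1 := Matrix.mem_unitaryGroup_iff.mp hK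
  have hK2 : Kᴴ * K = 1 := Matrix.mem_unitaryGroup_iff'.mp hK
  have hf : K * vecMulVec v (star v) * Kᴴ = vecMulVec (K *ᵥ v) (star (K *ᵥ v)) := by
    rw [Matrix.mul_vecMulVec, Matrix.vecMulVec_mul, Matrix.star_mulVec]
  have hD : pseudo M N a ε - K * pseudo M N a ε * Kᴴ
      = ε • (vecMulVec v (star v) - vecMulVec (K *ᵥ v) (star (K *ᵥ v))) := by
    unfold pseudo
    rw [← hv, mul_add, add_mul, Matrix.mul_smul, Matrix.smul_mul, hf, Matrix.mul_smul,
      Matrix.smul_mul, mul_one, hK1, smul_sub]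
    abel
  have hunit := psiVec_unit (M := M) hNM a ha1
  have hunit2 : star (K *ᵥ v) ⬝ᵥ (K *ᵥ v) = 1 := by
    rw [Matrix.star_mulVec, ← Matrix.dotProduct_mulVec, Matrix.mulVec_mulVec, hK2,
      Matrix.one_mulVec, hunit]
  rw [hD, trace_proj_diff v (K *ᵥ v) hunit hunit2, mul_assoc, Real.sqrt_mul (by norm_num),
    Real.sqrt_mul (by positivity), Real.sqrt_sq hε0.le]
  have : Real.sqrt 2 ≠ 0 := by positivity
  field_simp

theorem ptrA_pseudo (hNM : N ≤ M) (a : Fin N → ℝ) (ε : ℝ) :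
    ptrA (pseudo M N a ε)
      = Matrix.diagonal fun k => ((ε * a k ^ 2 + M * ((1 - ε) / (M * N)) : ℝ) : ℂ) := by
  ext k l
  simp only [ptrA, pseudo, Matrix.of_apply, Matrix.add_apply, Matrix.smul_apply,
    Matrix.vecMulVec_apply, Finset.sum_add_distrib, Pi.star_apply]
  have h1 : ∀ i : Fin M, ε • (psiVec a (i, k) * star (psiVec a (i, l)))
      = if (i : ℕ) = (k : ℕ) then ε • ((a k : ℂ) * star (psiVec a (i, l))) else 0 := by
    intro i
    simp only [psiVec]
    split_ifs <;> simp
  simp only [h1]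
  rw [sum_val_eq hNM k fun i => ε • ((a k : ℂ) * star (psiVec a (i, l)))]
  by_cases h : k = l
  · subst h
    simp [psiVec]
    left
    ring
  · have : (k : ℕ) ≠ l := fun h' => h (Fin.ext h')
    simp [psiVec, this, h]

/-! ### Cyclic unitaries -/

theorem diagonal_cyclic (hNM : N ≤ M) (a : Fin N → ℝ) (ε : ℝ) (u : Fin N → ℂ) :
    Matrix.diagonal u * ptrA (pseudo M N a ε) = ptrA (pseudo M N a ε) * Matrix.diagonal u := by
  rw [ptrA_pseudo hNM, Matrix.diagonal_mul_diagonal, Matrix.diagonal_mul_diagonal]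
  simp only [mul_comm]

theorem diagonal_unitary (u : Fin N → ℂ) (hu : ∀ k, ‖u k‖ = 1) :
    Matrix.diagonal u ∈ Matrix.unitaryGroup (Fin N) ℂ := by
  rw [Matrix.mem_unitaryGroup_iff, Matrix.star_eq_conjTranspose, Matrix.diagonal_conjTranspose,
    Matrix.diagonal_mul_diagonal, ← Matrix.diagonal_one]
  congr 1
  ext k
  rw [Pi.star_apply, Complex.star_def, Complex.mul_conj, Complex.normSq_eq_norm_sq, hu]
  simp

/-- A Schmidt weight strictly larger than all the others is, after mixing with the identity, a
simple eigenvalue of `ρ_B`, so a cyclic unitary acts on the corresponding vector by a phase. -/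
theorem norm_cyclic_entry (hNM : N ≤ M) (a : Fin N → ℝ) {ε : ℝ} (hε0 : 0 < ε) (m : Fin N)
    (hm : ∀ k, k ≠ m → a k ^ 2 < a m ^ 2) {U : Matrix (Fin N) (Fin N) ℂ}
    (hU : U ∈ Matrix.unitaryGroup (Fin N) ℂ)
    (hc : U * ptrA (pseudo M N a ε) = ptrA (pseudo M N a ε) * U) : ‖U m m‖ = 1 := by
  have h0 : ∀ k, k ≠ m → U k m = 0 := by
    intro k hk
    have h := congrFun (congrFun hc k) m
    rw [ptrA_pseudo hNM, Matrix.mul_diagonal, Matrix.diagonal_mul, mul_comm, ← sub_eq_zero,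
      ← sub_mul, mul_eq_zero] at h
    refine h.resolve_left ?_
    rw [← Complex.ofReal_sub, Complex.ofReal_eq_zero]
    have := mul_pos hε0 (sub_pos.mpr (hm k hk))
    intro h'
    linarith
  have h1 := congrFun (congrFun (Matrix.mem_unitaryGroup_iff'.mp hU) m) m
  rw [Matrix.mul_apply, Finset.sum_eq_single m (fun k _ hk => by rw [h0 k hk, mul_zero])
    (by simp), Matrix.star_apply, Matrix.one_apply_eq, Complex.star_def,
    ← Complex.normSq_eq_conj_mul_self, Complex.normSq_eq_norm_sq] at h1
  have h2 : ‖U m m‖ ^ 2 = 1 := by exact_mod_cast h1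
  exact (pow_eq_one_iff_of_nonneg (norm_nonneg _) two_ne_zero).mp h2

/-! ### The maximal distance -/

/-- A cyclic unitary whose Fu distance bounds all the others realises `d_max`. -/
theorem dmax_eq (ρ : Matrix (Fin M × Fin N) (Fin M × Fin N) ℂ) {U : Matrix (Fin N) (Fin N) ℂ}
    (hU : U ∈ Matrix.unitaryGroup (Fin N) ℂ) (hc : U * ptrA ρ = ptrA ρ * U)
    (hmax : ∀ V ∈ Matrix.unitaryGroup (Fin N) ℂ, V * ptrA ρ = ptrA ρ * V →
      fuDist ρ V ≤ fuDist ρ U) : dmax ρ = fuDist ρ U := by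
  refine IsGreatest.csSup_eq ⟨⟨U, hU, hc, rfl⟩, ?_⟩
  rintro x ⟨V, hV, hVc, rfl⟩
  exact hmax V hV hVc

/-- The balanced case: all Schmidt weights are at most one half. -/
theorem dmax_small (hNM : N ≤ M) (a : Fin N → ℝ) (ha1 : ∑ k, a k ^ 2 = 1) {ε : ℝ}
    (hε0 : 0 < ε) (h : ∀ k, a k ^ 2 ≤ 1 / 2) :
    dmax (pseudo M N a ε) = ε ∧
    ∃ U ∈ Matrix.unitaryGroup (Fin N) ℂ, (∀ i j, i ≠ j → U i j = 0) ∧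
      U * ptrA (pseudo M N a ε) = ptrA (pseudo M N a ε) * U ∧
      fuDist (pseudo M N a ε) U = dmax (pseudo M N a ε) := by
  obtain ⟨u, hu, hsum⟩ := exists_polygon (fun k => a k ^ 2) (fun k => sq_nonneg _)
    Finset.univ 0 le_rfl (by rw [ha1]; norm_num) (by intro k _; rw [ha1]; linarith [h k])
  have hU := diagonal_unitary u hu
  have hc := diagonal_cyclic hNM a ε u
  have hd : fuDist (pseudo M N a ε) (Matrix.diagonal u) = ε := by
    rw [fuDist_pseudo hNM a ha1 hε0 hU]
    simp only [Matrix.diagonal_apply_eq]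
    rw [hsum]
    simp
  have hmax := dmax_eq _ hU hc (fun V hV _ => by
    rw [hd, fuDist_pseudo hNM a ha1 hε0 hV]
    refine mul_le_of_le_one_right hε0.le (Real.sqrt_le_one.mpr ?_)
    linarith [sq_nonneg ‖∑ k, ((a k ^ 2 : ℝ) : ℂ) * V k k‖])
  exact ⟨hmax.trans hd, _, hU, fun i j hij => Matrix.diagonal_apply_ne _ hij, hc, hmax.symm⟩

/-- The dominated case: one Schmidt weight exceeds one half. -/
theorem dmax_large (hNM : N ≤ M) (a : Fin N → ℝ) (ha0 : ∀ k, 0 ≤ a k)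
    (ha1 : ∑ k, a k ^ 2 = 1) {ε : ℝ} (hε0 : 0 < ε) (m : Fin N) (h : 1 / 2 < a m ^ 2) :
    dmax (pseudo M N a ε) = 2 * ε * a m * Real.sqrt (1 - a m ^ 2) ∧
    ∃ U ∈ Matrix.unitaryGroup (Fin N) ℂ, (∀ i j, i ≠ j → U i j = 0) ∧
      U * ptrA (pseudo M N a ε) = ptrA (pseudo M N a ε) * U ∧
      fuDist (pseudo M N a ε) U = dmax (pseudo M N a ε) := by
  have hrest : ∑ k ∈ Finset.univ.erase m, a k ^ 2 = 1 - a m ^ 2 := by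
    rw [← ha1, ← Finset.add_sum_erase _ _ (Finset.mem_univ m)]; ring
  have hsplit : ∀ f : Fin N → ℂ, ∑ k, ((a k ^ 2 : ℝ) : ℂ) * f k
      = ((a m ^ 2 : ℝ) : ℂ) * f m + ∑ k ∈ Finset.univ.erase m, ((a k ^ 2 : ℝ) : ℂ) * f k :=
    fun f => (Finset.add_sum_erase _ _ (Finset.mem_univ m)).symm
  set u : Fin N → ℂ := fun k => if k = m then 1 else -1 with hudef
  have hu : ∀ k, ‖u k‖ = 1 := by
    intro k
    simp only [hudef]
    split_ifs <;> simp
  have hU := diagonal_unitary u hu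
  have hc := diagonal_cyclic hNM a ε u
  have hov : ∑ k, ((a k ^ 2 : ℝ) : ℂ) * u k = ((2 * a m ^ 2 - 1 : ℝ) : ℂ) := by
    have : ∑ k ∈ Finset.univ.erase m, ((a k ^ 2 : ℝ) : ℂ) * u k
        = ((-(1 - a m ^ 2) : ℝ) : ℂ) := by
      rw [← hrest, ← Finset.sum_neg_distrib, Complex.ofReal_sum]
      refine Finset.sum_congr rfl fun k hk => ?_
      simp [hudef, Finset.ne_of_mem_erase hk]
    rw [hsplit, this]
    simp only [hudef, if_true]
    push_cast
    ring
  have hd0 : fuDist (pseudo M N a ε) (Matrix.diagonal u)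
      = ε * Real.sqrt (1 - (2 * a m ^ 2 - 1) ^ 2) := by
    rw [fuDist_pseudo hNM a ha1 hε0 hU]
    simp only [Matrix.diagonal_apply_eq]
    rw [hov, Complex.norm_real, Real.norm_eq_abs, sq_abs]
  have hd : fuDist (pseudo M N a ε) (Matrix.diagonal u)
      = 2 * ε * a m * Real.sqrt (1 - a m ^ 2) := by
    have h1 : 1 - (2 * a m ^ 2 - 1) ^ 2 = (2 * a m) ^ 2 * (1 - a m ^ 2) := by ring
    rw [hd0, h1, Real.sqrt_mul (sq_nonneg _), Real.sqrt_sq (by linarith [ha0 m])]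
    ring
  have hlt : ∀ k, k ≠ m → a k ^ 2 < a m ^ 2 := by
    intro k hk
    have : a k ^ 2 ≤ ∑ k ∈ Finset.univ.erase m, a k ^ 2 :=
      Finset.single_le_sum (f := fun k => a k ^ 2) (fun k _ => sq_nonneg _)
        (Finset.mem_erase.mpr ⟨hk, Finset.mem_univ k⟩)
    linarith
  have hmax := dmax_eq _ hU hc (fun V hV hVc => by
    rw [hd0, fuDist_pseudo hNM a ha1 hε0 hV]
    refine mul_le_mul_of_nonneg_left (Real.sqrt_le_sqrt ?_) hε0.le
    have hVm := norm_cyclic_entry hNM a hε0 m hlt hV hVc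
    have h1 : ‖∑ k ∈ Finset.univ.erase m, ((a k ^ 2 : ℝ) : ℂ) * V k k‖ ≤ 1 - a m ^ 2 := by
      rw [← hrest]
      refine norm_sum_le_of_le _ fun k _ => ?_
      rw [norm_mul, Complex.norm_real, Real.norm_of_nonneg (sq_nonneg _)]
      exact mul_le_of_le_one_right (sq_nonneg _) (entry_norm_bound_of_unitary hV k k)
    have h2 : ‖((a m ^ 2 : ℝ) : ℂ) * V m m‖ = a m ^ 2 := by
      rw [norm_mul, Complex.norm_real, Real.norm_of_nonneg (sq_nonneg _), hVm, mul_one]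
    have h3 : 2 * a m ^ 2 - 1 ≤ ‖∑ k, ((a k ^ 2 : ℝ) : ℂ) * V k k‖ := by
      rw [hsplit fun k => V k k]
      have := norm_sub_le_norm_add (((a m ^ 2 : ℝ) : ℂ) * V m m)
        (∑ k ∈ Finset.univ.erase m, ((a k ^ 2 : ℝ) : ℂ) * V k k)
      linarith
    have h4 := pow_le_pow_left₀ (by linarith) h3 2
    linarith)
  exact ⟨hmax.trans hd, _, hU, fun i j hij => Matrix.diagonal_apply_ne _ hij, hc, hmax.symm⟩

end State

theorem stmt5 {M N : ℕ} (hN : 1 ≤ N) (hNM : N ≤ M)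
    (a : Fin N → ℝ) (ha0 : ∀ k, 0 ≤ a k) (ha1 : ∑ k, a k ^ 2 = 1)
    (ε : ℝ) (hε0 : 0 < ε) (hε1 : ε ≤ 1)
    (am : ℝ) (ham : IsGreatest (Set.range a) am) :
    (am ^ 2 ≤ 1 / 2 → dmax (pseudo M N a ε) = ε) ∧
    (1 / 2 < am ^ 2 →
      dmax (pseudo M N a ε) = 2 * ε * am * Real.sqrt (1 - am ^ 2)) ∧
    (∃ U ∈ Matrix.unitaryGroup (Fin N) ℂ, (∀ i j, i ≠ j → U i j = 0) ∧
      U * ptrA (pseudo M N a ε) = ptrA (pseudo M N a ε) * U ∧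
      fuDist (pseudo M N a ε) U = dmax (pseudo M N a ε)) := by
  obtain ⟨⟨m, rfl⟩, hub⟩ := ham
  have hle : ∀ k, a k ^ 2 ≤ a m ^ 2 := fun k =>
    pow_le_pow_left₀ (ha0 k) (hub ⟨k, rfl⟩) 2
  rcases le_or_gt (a m ^ 2) (1 / 2) with h | h
  · obtain ⟨h1, h2⟩ := dmax_small hNM a ha1 hε0 fun k => (hle k).trans h
    exact ⟨fun _ => h1, fun h' => absurd h' (not_lt.mpr h), h2⟩
  · obtain ⟨h1, h2⟩ := dmax_large hNM a ha0 ha1 hε0 m h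
    exact ⟨fun h' => absurd h (not_lt.mpr h'), fun _ => h1, h2⟩
end
end

section
/- Let D ≥ 2, let P be the swap operator on ℂ^D ⊗ ℂ^D (P = Σ_{i,j} |i⟩⟨j| ⊗ |j⟩⟨i|), P_sym = (I_{D²} + P)/2, P_as = (I_{D²} − P)/2, and for 0 ≤ p ≤ 1 let ρ_W = p·(2/(D²+D))·P_sym + (1−p)·(2/(D²−D))·P_as be the Werner state. Then d_max(ρ_W) = |2pD − D − 1| / (D² − 1), and this value of the Fu distance is attained by every traceless D×D unitary U (every unitary is cyclic for ρ_W since Tr_A(ρ_W) = I_D/D). -/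
/-!
The Werner state is an affine combination `a • 1 + b • P` of the identity and the swap, with
`b * D = (2pD - D - 1)/(D² - 1)`. Conjugation by `V = 1 ⊗ U` fixes the identity, so
`ρ - ρ_f = b • (P - V P Vᴴ)`, a difference of two Hermitian involutions. Since `P V P = U ⊗ 1`, the
cross term of the squared Frobenius norm is `Tr (P V P Vᴴ) = Tr (U ⊗ Uᴴ) = |Tr U|²`, hence
`d(ρ, U)² = b² (D² - |Tr U|²)` (`fuDist_werner`). This is at most `(b D)²`, with equality exactly
for traceless `U` unless `b = 0`. The reduced state is scalar, so every unitary is cyclic, and the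
permutation matrix of a fixed-point-free permutation (`exists_traceless_unitary`) attains the bound.
-/

noncomputable section
open Matrix Kronecker ComplexOrder

/-- The swap operator `P` on `ℂ^D ⊗ ℂ^D`, with entries
`P_{(i,k),(j,l)} = δ_{i,l} δ_{k,j}`. -/
def swapP (D : ℕ) : Matrix (Fin D × Fin D) (Fin D × Fin D) ℂ :=
  Matrix.of fun q r => if q.1 = r.2 ∧ q.2 = r.1 then 1 else 0

/-- The Werner state `ρ_W = p (2/(D²+D)) P_sym + (1-p) (2/(D²-D)) P_as`. -/
def werner (D : ℕ) (p : ℝ) : Matrix (Fin D × Fin D) (Fin D × Fin D) ℂ :=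
  (p * (2 / ((D : ℝ) ^ 2 + D))) • ((1 / 2 : ℝ) • (1 + swapP D)) +
    ((1 - p) * (2 / ((D : ℝ) ^ 2 - D))) • ((1 / 2 : ℝ) • (1 - swapP D))

lemma swapP_mul {D : ℕ} (M : Matrix (Fin D × Fin D) (Fin D × Fin D) ℂ) :
    swapP D * M = M.submatrix Prod.swap id := by
  ext ⟨i, k⟩ ⟨j, l⟩
  rw [Matrix.mul_apply, Finset.sum_eq_single (k, i)]
  · simp [swapP]
  · rintro ⟨x, y⟩ - h
    have : ¬ (i = y ∧ k = x) := by rintro ⟨rfl, rfl⟩; exact h rfl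
    simp [swapP, this]
  · simp

lemma mul_swapP {D : ℕ} (M : Matrix (Fin D × Fin D) (Fin D × Fin D) ℂ) :
    M * swapP D = M.submatrix id Prod.swap := by
  ext ⟨i, k⟩ ⟨j, l⟩
  rw [Matrix.mul_apply, Finset.sum_eq_single (l, j)]
  · simp [swapP]
  · rintro ⟨x, y⟩ - h
    have : ¬ (x = l ∧ y = j) := by rintro ⟨rfl, rfl⟩; exact h rfl
    simp [swapP, this]
  · simp

lemma swapP_mul_self (D : ℕ) : swapP D * swapP D = 1 := by
  rw [swapP_mul]
  ext ⟨i, k⟩ ⟨j, l⟩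
  simp only [swapP, Matrix.submatrix_apply, Matrix.of_apply, Matrix.one_apply, Prod.swap,
    Prod.mk.injEq, id]
  grind

lemma swapP_conjTranspose (D : ℕ) : (swapP D)ᴴ = swapP D := by
  ext ⟨i, k⟩ ⟨j, l⟩
  simp only [swapP, Matrix.conjTranspose_apply, Matrix.of_apply, apply_ite star, star_one,
    star_zero]
  grind

/-- Conjugation by the swap exchanges the two tensor factors. -/
lemma swapP_kronecker {D : ℕ} (A B : Matrix (Fin D) (Fin D) ℂ) :
    swapP D * (A ⊗ₖ B) * swapP D = B ⊗ₖ A := by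
  rw [swapP_mul, mul_swapP]
  ext ⟨i, k⟩ ⟨j, l⟩
  simp [mul_comm]

/-- The coefficient of the swap in the Werner state. -/
def wernerCoeff (D : ℕ) (p : ℝ) : ℝ :=
  (2 * p * D - D - 1) / ((D : ℝ) ^ 2 - 1) / D

lemma werner_eq {D : ℕ} (hD : 2 ≤ D) (p : ℝ) :
    werner D p = (((D : ℝ)⁻¹ - wernerCoeff D p) / D) • (1 : Matrix _ _ ℂ)
      + wernerCoeff D p • swapP D := by
  have h2 : (2 : ℝ) ≤ D := by exact_mod_cast hD
  have h0 : (D : ℝ) ≠ 0 := by positivity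
  have h1 : (D : ℝ) - 1 ≠ 0 := by linarith
  have h3 : (D : ℝ) + 1 ≠ 0 := by positivity
  have e1 : (D : ℝ) ^ 2 - 1 = (D - 1) * (D + 1) := by ring
  have e2 : (D : ℝ) ^ 2 + D = D * (D + 1) := by ring
  have e3 : (D : ℝ) ^ 2 - D = D * (D - 1) := by ring
  unfold werner wernerCoeff
  rw [e1, e2, e3]
  match_scalars
  · field_simp
    ring
  · field_simp
    ring

lemma ptrA_werner {D : ℕ} (hD : 2 ≤ D) (p : ℝ) :
    ptrA (werner D p) = ((D : ℂ))⁻¹ • 1 := by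
  have h0 : (D : ℂ) ≠ 0 := by exact_mod_cast (by omega : D ≠ 0)
  rw [werner_eq hD]
  ext k l
  have hs : ∀ i : Fin D, (if i = l ∧ k = i then (1 : ℂ) else 0)
      = if i = l then (if k = l then 1 else 0) else 0 := by
    intro i; grind
  simp only [ptrA, swapP, Matrix.of_apply, Matrix.add_apply, Matrix.smul_apply, Matrix.one_apply,
    Prod.mk.injEq, true_and, hs, Finset.sum_add_distrib, ← Finset.mul_sum, Finset.sum_const,
    Finset.sum_ite_eq', Finset.mem_univ, if_true, Finset.card_univ, Fintype.card_fin,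
    Complex.real_smul, smul_eq_mul, nsmul_eq_mul]
  split_ifs
  · push_cast
    field_simp
    ring
  · simp

/-- The trace of the squared difference of the swap and its conjugate by `1 ⊗ U`. -/
lemma trace_swap_sub_conj {D : ℕ} {U : Matrix (Fin D) (Fin D) ℂ}
    (hU : U ∈ Matrix.unitaryGroup (Fin D) ℂ) :
    ((swapP D - rhoF (swapP D) U)ᴴ * (swapP D - rhoF (swapP D) U)).trace
      = ((2 * ((D : ℝ) ^ 2 - Complex.normSq U.trace) : ℝ) : ℂ) := by
  have hU' : Uᴴ * U = 1 := Matrix.mem_unitaryGroup_iff'.mp hU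
  have hU'' : U * Uᴴ = 1 := Matrix.mem_unitaryGroup_iff.mp hU
  unfold rhoF
  set P := swapP D with hP
  set V := (1 : Matrix (Fin D) (Fin D) ℂ) ⊗ₖ U with hV
  have hVe : Vᴴ = (1 : Matrix (Fin D) (Fin D) ℂ) ⊗ₖ Uᴴ := by
    rw [hV, Matrix.conjTranspose_kronecker, Matrix.conjTranspose_one]
  have hVV : Vᴴ * V = 1 := by
    rw [hVe, hV, ← Matrix.mul_kronecker_mul, hU', one_mul, Matrix.one_kronecker_one]
  have hVV' : V * Vᴴ = 1 := by
    rw [hVe, hV, ← Matrix.mul_kronecker_mul, hU'', one_mul, Matrix.one_kronecker_one]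
  have hPP : P * P = 1 := swapP_mul_self D
  have hPH : Pᴴ = P := swapP_conjTranspose D
  have hQH : (V * P * Vᴴ)ᴴ = V * P * Vᴴ := by
    simp only [Matrix.conjTranspose_mul, Matrix.conjTranspose_conjTranspose, hPH, mul_assoc]
  have hQQ : V * P * Vᴴ * (V * P * Vᴴ) = 1 := by
    calc V * P * Vᴴ * (V * P * Vᴴ) = V * P * (Vᴴ * V) * P * Vᴴ := by noncomm_ring
      _ = V * (P * P) * Vᴴ := by rw [hVV]; noncomm_ring
      _ = 1 := by rw [hPP, mul_one, hVV']
  have hcross : (P * (V * P * Vᴴ)).trace = (Complex.normSq U.trace : ℂ) := by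
    calc (P * (V * P * Vᴴ)).trace = ((P * V * P) * Vᴴ).trace := by simp only [mul_assoc]
      _ = (U ⊗ₖ Uᴴ).trace := by
        rw [hVe, hP, hV, swapP_kronecker, ← Matrix.mul_kronecker_mul, mul_one, one_mul]
      _ = _ := by
        rw [Matrix.trace_kronecker, Matrix.trace_conjTranspose, Complex.normSq_eq_conj_mul_self,
          mul_comm]
        rfl
  rw [Matrix.conjTranspose_sub, hPH, hQH, sub_mul, mul_sub, mul_sub, hPP, hQQ]
  simp only [Matrix.trace_sub]
  rw [Matrix.trace_mul_comm (V * P * Vᴴ) P, hcross, Matrix.trace_one]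
  simp only [Fintype.card_prod, Fintype.card_fin]
  push_cast
  ring

lemma werner_sub_rhoF {D : ℕ} (hD : 2 ≤ D) (p : ℝ) {U : Matrix (Fin D) (Fin D) ℂ}
    (hU : U ∈ Matrix.unitaryGroup (Fin D) ℂ) :
    werner D p - rhoF (werner D p) U
      = wernerCoeff D p • (swapP D - rhoF (swapP D) U) := by
  have hU'' : U * Uᴴ = 1 := Matrix.mem_unitaryGroup_iff.mp hU
  have hVV' : ((1 : Matrix (Fin D) (Fin D) ℂ) ⊗ₖ U) * ((1 : Matrix (Fin D) (Fin D) ℂ) ⊗ₖ U)ᴴ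
      = 1 := by
    rw [Matrix.conjTranspose_kronecker, Matrix.conjTranspose_one, ← Matrix.mul_kronecker_mul,
      hU'', one_mul, Matrix.one_kronecker_one]
  rw [werner_eq hD]
  simp only [rhoF, mul_add, add_mul, Matrix.mul_smul, Matrix.smul_mul, mul_one, hVV', smul_sub]
  abel

lemma fuDist_werner {D : ℕ} (hD : 2 ≤ D) (p : ℝ) {U : Matrix (Fin D) (Fin D) ℂ}
    (hU : U ∈ Matrix.unitaryGroup (Fin D) ℂ) :
    fuDist (werner D p) U
      = |wernerCoeff D p| * Real.sqrt ((D : ℝ) ^ 2 - Complex.normSq U.trace) := by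
  unfold fuDist
  rw [werner_sub_rhoF hD p hU]
  simp only [Matrix.conjTranspose_smul, Matrix.mul_smul, Matrix.smul_mul, Matrix.trace_smul,
    trace_swap_sub_conj hU, star_trivial, Complex.smul_re, Complex.ofReal_re, smul_eq_mul]
  rw [← mul_assoc, Real.sqrt_mul (mul_self_nonneg _), Real.sqrt_mul_self_eq_abs,
    Real.sqrt_mul zero_le_two]
  have : Real.sqrt 2 ≠ 0 := by positivity
  field_simp

lemma abs_wernerCoeff_mul {D : ℕ} (hD : 2 ≤ D) (p : ℝ) :
    |wernerCoeff D p| * D = |2 * p * D - D - 1| / ((D : ℝ) ^ 2 - 1) := by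
  have h2 : (2 : ℝ) ≤ D := by exact_mod_cast hD
  have h0 : (0 : ℝ) < D := by positivity
  have h1 : (0 : ℝ) < (D : ℝ) ^ 2 - 1 := by nlinarith
  rw [wernerCoeff, abs_div, abs_div, abs_of_pos h0, abs_of_pos h1, div_mul_cancel₀ _ h0.ne']

/-- The cyclic shift is a permutation without fixed points, so its matrix is traceless. -/
lemma exists_traceless_unitary {D : ℕ} (hD : 2 ≤ D) :
    ∃ U ∈ Matrix.unitaryGroup (Fin D) ℂ, U.trace = 0 := by
  obtain ⟨n, rfl⟩ : ∃ n, D = n + 2 := ⟨D - 2, by omega⟩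
  refine ⟨(finRotate (n + 2)).permMatrix ℂ, ?_, ?_⟩
  · rw [Matrix.mem_unitaryGroup_iff, Matrix.star_eq_conjTranspose,
      Matrix.conjTranspose_permMatrix, ← Matrix.permMatrix_mul]
    simp
  · rw [Matrix.trace_permutation]
    have : Function.fixedPoints (finRotate (n + 2)) = ∅ := by
      ext i
      simp [Function.mem_fixedPoints, Function.IsFixedPt]
    simp [this]

theorem stmt6 {D : ℕ} (hD : 2 ≤ D) (p : ℝ) (hp0 : 0 ≤ p) (hp1 : p ≤ 1) :
    ptrA (werner D p) = ((D : ℂ))⁻¹ • 1 ∧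
    dmax (werner D p) = |2 * p * D - D - 1| / ((D : ℝ) ^ 2 - 1) ∧
    (∀ U ∈ Matrix.unitaryGroup (Fin D) ℂ, U.trace = 0 →
      fuDist (werner D p) U = |2 * p * D - D - 1| / ((D : ℝ) ^ 2 - 1)) := by
  have htl : ∀ U ∈ Matrix.unitaryGroup (Fin D) ℂ, U.trace = 0 →
      fuDist (werner D p) U = |2 * p * D - D - 1| / ((D : ℝ) ^ 2 - 1) := by
    intro U hU h
    rw [fuDist_werner hD p hU, h, map_zero, sub_zero, Real.sqrt_sq (Nat.cast_nonneg D),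
      abs_wernerCoeff_mul hD]
  refine ⟨ptrA_werner hD p, ?_, htl⟩
  refine IsGreatest.csSup_eq ⟨?_, ?_⟩
  · obtain ⟨U, hU, h⟩ := exists_traceless_unitary hD
    exact ⟨U, hU, by simp [ptrA_werner hD p], (htl U hU h).symm⟩
  · rintro _ ⟨U, hU, -, rfl⟩
    rw [fuDist_werner hD p hU, ← abs_wernerCoeff_mul hD]
    refine mul_le_mul_of_nonneg_left ?_ (abs_nonneg _)
    exact Real.sqrt_le_iff.mpr
      ⟨Nat.cast_nonneg D, by linarith [Complex.normSq_nonneg U.trace]⟩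
end
end

section
/- Let ρ be any bipartite density matrix on ℂ^M ⊗ ℂ^N. Then d_max(ρ) ≤ √( 2·( Tr(ρ²) − 1/(MN) ) ). -/
/-!
The bound holds for every unitary on the second factor, cyclic or not. Write `V = I ⊗ U` and
`σ = ρ - I/(MN)`. Conjugation by `V` fixes the identity, so `ρ - ρ_f = σ - V σ Vᴴ`, a difference
of two matrices with the same Frobenius norm (`re_trace_conj`). The parallelogram law then gives
`‖ρ - ρ_f‖² ≤ 4 ‖σ‖²` (`re_trace_sub_le`), and `‖σ‖² = Tr ρ² - 1/(MN)` because `Tr ρ = 1`.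
-/

noncomputable section
open Matrix Kronecker ComplexOrder

lemma re_trace_nonneg {n : Type*} [Fintype n] (A : Matrix n n ℂ) :
    0 ≤ (Aᴴ * A).trace.re :=
  (Complex.le_def.mp (Matrix.posSemidef_conjTranspose_mul_self A).trace_nonneg).1

/-- The parallelogram law for the squared Frobenius norm, with the norm of the sum dropped. -/
lemma re_trace_sub_le {n : Type*} [Fintype n] (X Y : Matrix n n ℂ) :
    ((X - Y)ᴴ * (X - Y)).trace.re ≤ 2 * (Xᴴ * X).trace.re + 2 * (Yᴴ * Y).trace.re := by
  have h := re_trace_nonneg (X + Y)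
  simp only [conjTranspose_add, conjTranspose_sub, add_mul, mul_add, sub_mul, mul_sub,
    trace_add, trace_sub, Complex.add_re, Complex.sub_re] at h ⊢
  linarith

/-- Unitary conjugation preserves the squared Frobenius norm. -/
lemma re_trace_conj {n : Type*} [Fintype n] [DecidableEq n] (V X : Matrix n n ℂ)
    (hV : Vᴴ * V = 1) :
    ((V * X * Vᴴ)ᴴ * (V * X * Vᴴ)).trace.re = (Xᴴ * X).trace.re := by
  have h : (V * X * Vᴴ)ᴴ * (V * X * Vᴴ) = V * (Xᴴ * X * Vᴴ) := by
    simp only [conjTranspose_mul, conjTranspose_conjTranspose, Matrix.mul_assoc]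
    rw [← Matrix.mul_assoc Vᴴ V, hV, Matrix.one_mul]
  rw [h, trace_mul_comm, Matrix.mul_assoc, hV, Matrix.mul_one]

theorem stmt8 {M N : ℕ} (hM : 0 < M) (hN : 0 < N)
    (ρ : Matrix (Fin M × Fin N) (Fin M × Fin N) ℂ)
    (hρ : ρ.PosSemidef) (hρtr : ρ.trace = 1) :
    dmax ρ ≤ Real.sqrt (2 * (((ρ * ρ).trace).re - 1 / ((M : ℝ) * N))) := by
  refine Real.sSup_le ?_ (Real.sqrt_nonneg _)
  rintro x ⟨U, hU, -, rfl⟩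
  unfold fuDist rhoF
  set V := (1 : Matrix (Fin M) (Fin M) ℂ) ⊗ₖ U with hVdef
  have hU1 : Uᴴ * U = 1 := Matrix.mem_unitaryGroup_iff'.mp hU
  have hU2 : U * Uᴴ = 1 := Matrix.mem_unitaryGroup_iff.mp hU
  have hV : Vᴴ * V = 1 := by
    rw [hVdef, conjTranspose_kronecker, ← mul_kronecker_mul, hU1]; simp
  have hV2 : V * Vᴴ = 1 := by
    rw [hVdef, conjTranspose_kronecker, ← mul_kronecker_mul, hU2]; simp
  have hM' : (M : ℝ) ≠ 0 := by exact_mod_cast hM.ne'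
  have hN' : (N : ℝ) ≠ 0 := by exact_mod_cast hN.ne'
  set c : ℝ := 1 / ((M : ℝ) * N) with hc
  set σ : Matrix (Fin M × Fin N) (Fin M × Fin N) ℂ := ρ - c • 1 with hσ
  have hdiff : ρ - V * ρ * Vᴴ = σ - V * σ * Vᴴ := by
    simp only [hσ, Matrix.mul_sub, Matrix.sub_mul, Matrix.mul_smul, Matrix.smul_mul,
      Matrix.mul_one, hV2]
    abel
  have hnorm : (σᴴ * σ).trace.re = (ρ * ρ).trace.re - c := by
    have hH : σᴴ = σ := by simp [hσ, hρ.isHermitian.eq]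
    rw [hH, hσ]
    simp only [Matrix.mul_sub, Matrix.sub_mul, Matrix.mul_smul, Matrix.smul_mul,
      Matrix.mul_one, Matrix.one_mul, trace_sub, trace_smul, hρtr, trace_one, Complex.sub_re,
      Complex.smul_re, Fintype.card_prod, Fintype.card_fin, Complex.one_re, smul_eq_mul,
      Nat.cast_mul, Complex.natCast_re, Complex.mul_re, Complex.natCast_im]
    rw [hc]
    field_simp
    ring
  have key := re_trace_sub_le σ (V * σ * Vᴴ)
  rw [re_trace_conj V σ hV, hnorm, ← hdiff] at key
  rw [one_div, ← Real.sqrt_inv, ← Real.sqrt_mul (by norm_num)]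
  exact Real.sqrt_le_sqrt (by linarith)
end
end

section
/- Let ρ be a bipartite density matrix on ℂ^M ⊗ ℂ^N, let U_1 be an M×M unitary and U_2 an N×N unitary. Then for every N×N unitary U, d( (U_1 ⊗ U_2) ρ (U_1 ⊗ U_2)†, U ) = d( ρ, U_2† U U_2 ), and U commutes with Tr_A((U_1⊗U_2)ρ(U_1⊗U_2)†) if and only if U_2† U U_2 commutes with Tr_A(ρ). Consequently d_max( (U_1 ⊗ U_2) ρ (U_1 ⊗ U_2)† ) = d_max(ρ), i.e., d_max is invariant under local unitary operations. -/
/-!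
Write `W = U₁ ⊗ U₂` and `V = U₂ᴴ U U₂`. Since `(1 ⊗ U) W = W (1 ⊗ V)`, evolving `W ρ Wᴴ` by `U`
gives the `W`-conjugate of `ρ` evolved by `V`, and the Frobenius norm does not see conjugation by
the unitary `W`; this is `fuDist_conj_kronecker`. The reduced state of `W ρ Wᴴ` is `U₂ ρ_B U₂ᴴ`
(`ptrA_conj_kronecker`, via the duality between the partial trace and `X ↦ 1 ⊗ X`), so `U` is
cyclic for `W ρ Wᴴ` exactly when `V` is cyclic for `ρ`. As `U ↦ U₂ᴴ U U₂` is a bijection of the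
unitary group, the two suprema defining `dmax` range over the same set of values.
-/

noncomputable section
open Matrix Kronecker ComplexOrder

/-- The partial trace is adjoint to `X ↦ 1 ⊗ X` for the trace pairing. -/
lemma trace_ptrA_mul {M N : ℕ} (ρ : Matrix (Fin M × Fin N) (Fin M × Fin N) ℂ)
    (X : Matrix (Fin N) (Fin N) ℂ) :
    (ptrA ρ * X).trace = (ρ * ((1 : Matrix (Fin M) (Fin M) ℂ) ⊗ₖ X)).trace := by
  have hdiag : ∀ i k, (ρ * ((1 : Matrix (Fin M) (Fin M) ℂ) ⊗ₖ X)) (i, k) (i, k) =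
      ∑ l, ρ (i, k) (i, l) * X l k := fun i k => by
    simp only [Matrix.mul_apply, Fintype.sum_prod_type, kroneckerMap_apply]
    rw [Finset.sum_eq_single i]
    · simp
    · intro j _ hj
      simp [hj]
    · simp
  simp only [Matrix.trace, Matrix.diag_apply, Fintype.sum_prod_type, hdiag]
  rw [Finset.sum_comm]
  refine Finset.sum_congr rfl fun k _ => ?_
  simp only [Matrix.mul_apply, ptrA, Matrix.of_apply, Finset.sum_mul]
  exact Finset.sum_comm

/-- The partial trace over the first factor is blind to a unitary on that factor and
equivariant for an arbitrary matrix on the second factor: in `Tr ((W ρ Wᴴ) (1 ⊗ X))` the operator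
`Wᴴ (1 ⊗ X) W` collapses to `1 ⊗ U₂ᴴ X U₂`. -/
lemma ptrA_conj_kronecker {M N : ℕ} (ρ : Matrix (Fin M × Fin N) (Fin M × Fin N) ℂ)
    {U₁ : Matrix (Fin M) (Fin M) ℂ} (h₁ : U₁ᴴ * U₁ = 1) (U₂ : Matrix (Fin N) (Fin N) ℂ) :
    ptrA ((U₁ ⊗ₖ U₂) * ρ * (U₁ ⊗ₖ U₂)ᴴ) = U₂ * ptrA ρ * U₂ᴴ := by
  rw [Matrix.ext_iff_trace_mul_right]
  intro X
  have hW : (U₁ ⊗ₖ U₂)ᴴ * ((1 : Matrix (Fin M) (Fin M) ℂ) ⊗ₖ X) * (U₁ ⊗ₖ U₂) =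
      (1 : Matrix (Fin M) (Fin M) ℂ) ⊗ₖ (U₂ᴴ * X * U₂) := by
    rw [conjTranspose_kronecker, ← mul_kronecker_mul, ← mul_kronecker_mul, mul_one, h₁]
  calc (ptrA ((U₁ ⊗ₖ U₂) * ρ * (U₁ ⊗ₖ U₂)ᴴ) * X).trace
      = ((U₁ ⊗ₖ U₂) * (ρ * ((U₁ ⊗ₖ U₂)ᴴ * (1 ⊗ₖ X)))).trace := by
        rw [trace_ptrA_mul]; simp only [Matrix.mul_assoc]
    _ = (ρ * (1 ⊗ₖ (U₂ᴴ * X * U₂))).trace := by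
        rw [trace_mul_comm, ← hW]; simp only [Matrix.mul_assoc]
    _ = (U₂ * ptrA ρ * U₂ᴴ * X).trace := by
        rw [← trace_ptrA_mul, ← Matrix.mul_assoc, trace_mul_comm]
        simp only [Matrix.mul_assoc]

lemma rhoF_conj_kronecker {M N : ℕ} (ρ : Matrix (Fin M × Fin N) (Fin M × Fin N) ℂ)
    (U₁ : Matrix (Fin M) (Fin M) ℂ) {U₂ : Matrix (Fin N) (Fin N) ℂ} (h₂ : U₂ * U₂ᴴ = 1)
    (U : Matrix (Fin N) (Fin N) ℂ) :
    rhoF ((U₁ ⊗ₖ U₂) * ρ * (U₁ ⊗ₖ U₂)ᴴ) U =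
      (U₁ ⊗ₖ U₂) * rhoF ρ (U₂ᴴ * U * U₂) * (U₁ ⊗ₖ U₂)ᴴ := by
  have hc : ((1 : Matrix (Fin M) (Fin M) ℂ) ⊗ₖ U) * (U₁ ⊗ₖ U₂) =
      (U₁ ⊗ₖ U₂) * ((1 : Matrix (Fin M) (Fin M) ℂ) ⊗ₖ (U₂ᴴ * U * U₂)) := by
    rw [← mul_kronecker_mul, ← mul_kronecker_mul, one_mul, mul_one, ← Matrix.mul_assoc,
      ← Matrix.mul_assoc, h₂, one_mul]
  calc rhoF ((U₁ ⊗ₖ U₂) * ρ * (U₁ ⊗ₖ U₂)ᴴ) U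
      = ((1 ⊗ₖ U) * (U₁ ⊗ₖ U₂)) * ρ * ((1 ⊗ₖ U) * (U₁ ⊗ₖ U₂))ᴴ := by
        simp only [rhoF, conjTranspose_mul, Matrix.mul_assoc]
    _ = _ := by
        rw [hc]; simp only [rhoF, conjTranspose_mul, Matrix.mul_assoc]

/-- The Frobenius norm is invariant under conjugation by a unitary. -/
lemma trace_conj_unitary {n : Type*} [Fintype n] [DecidableEq n] (D : Matrix n n ℂ)
    {W : Matrix n n ℂ} (hW : Wᴴ * W = 1) :
    ((W * D * Wᴴ)ᴴ * (W * D * Wᴴ)).trace = (Dᴴ * D).trace := by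
  calc ((W * D * Wᴴ)ᴴ * (W * D * Wᴴ)).trace
      = (W * (Dᴴ * (Wᴴ * W) * D * Wᴴ)).trace := by
        simp only [conjTranspose_mul, conjTranspose_conjTranspose, Matrix.mul_assoc]
    _ = (Dᴴ * D).trace := by
        rw [trace_mul_comm, hW, mul_one, Matrix.mul_assoc, hW, mul_one]

lemma fuDist_conj_kronecker {M N : ℕ} (ρ : Matrix (Fin M × Fin N) (Fin M × Fin N) ℂ)
    {U₁ : Matrix (Fin M) (Fin M) ℂ} (h₁ : U₁ᴴ * U₁ = 1)
    {U₂ : Matrix (Fin N) (Fin N) ℂ} (h₂ : U₂ᴴ * U₂ = 1) (U : Matrix (Fin N) (Fin N) ℂ) :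
    fuDist ((U₁ ⊗ₖ U₂) * ρ * (U₁ ⊗ₖ U₂)ᴴ) U = fuDist ρ (U₂ᴴ * U * U₂) := by
  have hW : (U₁ ⊗ₖ U₂)ᴴ * (U₁ ⊗ₖ U₂) = 1 := by
    rw [conjTranspose_kronecker, ← mul_kronecker_mul, h₁, h₂, one_kronecker_one]
  rw [fuDist, rhoF_conj_kronecker ρ U₁ (mul_eq_one_comm.mp h₂), ← Matrix.sub_mul,
    ← Matrix.mul_sub, trace_conj_unitary _ hW, fuDist]

/-- Moving a conjugation across a commutation relation. -/
lemma commute_conj_iff {n : Type*} [Fintype n] [DecidableEq n] (U R : Matrix n n ℂ)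
    {V : Matrix n n ℂ} (hV : Vᴴ * V = 1) :
    U * (V * R * Vᴴ) = (V * R * Vᴴ) * U ↔ (Vᴴ * U * V) * R = R * (Vᴴ * U * V) := by
  have hV' : V * Vᴴ = 1 := mul_eq_one_comm.mp hV
  have hl : ∀ X, Vᴴ * (V * X) = X := fun X : Matrix n n ℂ => by
    rw [← Matrix.mul_assoc, hV, one_mul]
  have hr : ∀ X, V * (Vᴴ * X) = X := fun X : Matrix n n ℂ => by
    rw [← Matrix.mul_assoc, hV', one_mul]
  constructor <;> intro h
  · simpa [Matrix.mul_assoc, hl, hr, hV, hV'] using congrArg (fun X => Vᴴ * X * V) h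
  · simpa [Matrix.mul_assoc, hl, hr, hV, hV'] using congrArg (fun X => V * X * Vᴴ) h

theorem stmt9 {M N : ℕ}
    (ρ : Matrix (Fin M × Fin N) (Fin M × Fin N) ℂ)
    (hρ : ρ.PosSemidef) (hρtr : ρ.trace = 1)
    (U₁ : Matrix (Fin M) (Fin M) ℂ) (hU₁ : U₁ ∈ Matrix.unitaryGroup (Fin M) ℂ)
    (U₂ : Matrix (Fin N) (Fin N) ℂ) (hU₂ : U₂ ∈ Matrix.unitaryGroup (Fin N) ℂ) :
    (∀ U ∈ Matrix.unitaryGroup (Fin N) ℂ,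
      fuDist ((U₁ ⊗ₖ U₂) * ρ * (U₁ ⊗ₖ U₂)ᴴ) U = fuDist ρ (U₂ᴴ * U * U₂) ∧
      (U * ptrA ((U₁ ⊗ₖ U₂) * ρ * (U₁ ⊗ₖ U₂)ᴴ) = ptrA ((U₁ ⊗ₖ U₂) * ρ * (U₁ ⊗ₖ U₂)ᴴ) * U ↔
        (U₂ᴴ * U * U₂) * ptrA ρ = ptrA ρ * (U₂ᴴ * U * U₂))) ∧
    dmax ((U₁ ⊗ₖ U₂) * ρ * (U₁ ⊗ₖ U₂)ᴴ) = dmax ρ := by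
  have h₁ : U₁ᴴ * U₁ = 1 := Matrix.mem_unitaryGroup_iff'.mp hU₁
  have h₂ : U₂ᴴ * U₂ = 1 := Matrix.mem_unitaryGroup_iff'.mp hU₂
  have h₂' : U₂ * U₂ᴴ = 1 := Matrix.mem_unitaryGroup_iff.mp hU₂
  have hU₂s : U₂ᴴ ∈ Matrix.unitaryGroup (Fin N) ℂ := Unitary.star_mem hU₂
  have key : ∀ U : Matrix (Fin N) (Fin N) ℂ,
      fuDist ((U₁ ⊗ₖ U₂) * ρ * (U₁ ⊗ₖ U₂)ᴴ) U = fuDist ρ (U₂ᴴ * U * U₂) ∧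
      (U * ptrA ((U₁ ⊗ₖ U₂) * ρ * (U₁ ⊗ₖ U₂)ᴴ) = ptrA ((U₁ ⊗ₖ U₂) * ρ * (U₁ ⊗ₖ U₂)ᴴ) * U ↔
        (U₂ᴴ * U * U₂) * ptrA ρ = ptrA ρ * (U₂ᴴ * U * U₂)) := fun U => by
    refine ⟨fuDist_conj_kronecker ρ h₁ h₂ U, ?_⟩
    rw [ptrA_conj_kronecker ρ h₁]
    exact commute_conj_iff U (ptrA ρ) h₂
  refine ⟨fun U _ => key U, ?_⟩
  unfold dmax
  congr 1
  ext x
  constructor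
  · rintro ⟨U, hU, hc, rfl⟩
    exact ⟨U₂ᴴ * U * U₂, mul_mem (mul_mem hU₂s hU) hU₂, (key U).2.mp hc, (key U).1⟩
  · rintro ⟨V, hV, hc, rfl⟩
    have hback : U₂ᴴ * (U₂ * V * U₂ᴴ) * U₂ = V := by
      rw [Matrix.mul_assoc, Matrix.mul_assoc (U₂ * V), h₂, mul_one, ← Matrix.mul_assoc, h₂,
        one_mul]
    refine ⟨U₂ * V * U₂ᴴ, mul_mem (mul_mem hU₂ hV) hU₂s, (key _).2.mpr ?_, ?_⟩
    · rwa [hback]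
    · rw [(key _).1, hback]
end
end

section
/- For 0 < a < 1, let ρ_a be the P. Horodecki two-qutrit bound entangled state: with P_v = |v⟩⟨v|, Q = I_9 − Σ_{k=0}^{2} P_k⊗P_k − P_2⊗P_0, |Ψ⟩ = (1/√3)(|00⟩+|11⟩+|22⟩), ρ_ent = (3/8)P_Ψ + (1/8)Q, |Φ_a⟩ = |2⟩ ⊗ ( √((1+a)/2)|0⟩ + √((1−a)/2)|2⟩ ), and ρ_a = (8a/(8a+1))·ρ_ent + (1/(8a+1))·P_{Φ_a}. Then d_max(ρ_a) = 2√2·a/(8a+1), and this value of the Fu distance is attained by the diagonal unitary U = diag(1,−1,1) (which is cyclic for ρ_a). -/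
/-!
Split `ρ_a` into `3 × 3` blocks `⟨i|ρ_a|j⟩` with respect to subsystem A; the map `ρ ↦ ρ_f`
conjugates each block by `U`. The blocks `(0,0)` and `(1,1)` are scalar, so a cyclic `U`, which
commutes with the sum `ρ_B` of the diagonal blocks, commutes with every diagonal block, and these
do not contribute to `ρ - ρ_f`. The off-diagonal blocks are `a/(8a+1) • E_ij`, and
`‖E_ij - U E_ij U†‖² = 2 - 2 Re(U_ii conj U_jj)` by `col_sum`. Hence `‖ρ - ρ_f‖²` depends only on
the diagonal of `U` (`trace_cyclic`).

Since `ρ_B` is nondegenerate with eigenvectors `|1⟩` and `(|0⟩ ± |2⟩)/√2`, a cyclic `U` has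
`U₀₀ = U₂₂ = p` and `|U₁₁| = 1` (`cyclic_entries`). With `r = U₁₁` this gives
`‖ρ - ρ_f‖² = (a/(8a+1))² (16 - 4 |p + r|²) ≤ 16 a²/(8a+1)²`, with equality for `p = 1`, `r = -1`.
-/

noncomputable section
open Matrix Kronecker ComplexOrder

/-- Standard basis vector `|i⟩` of `ℂ³`. -/
def e3 (i : Fin 3) : Fin 3 → ℂ := fun j => if j = i then 1 else 0

/-- Rank-one projector `P_i = |i⟩⟨i|`. -/
def proj3 (i : Fin 3) : Matrix (Fin 3) (Fin 3) ℂ :=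
  Matrix.vecMulVec (e3 i) (star (e3 i))

/-- `Q = I₉ - Σ_k P_k ⊗ P_k - P₂ ⊗ P₀`. -/
def Qmat : Matrix (Fin 3 × Fin 3) (Fin 3 × Fin 3) ℂ :=
  1 - (∑ k, proj3 k ⊗ₖ proj3 k) - proj3 2 ⊗ₖ proj3 0

/-- The maximally entangled state `|Ψ⟩ = (1/√3)(|00⟩+|11⟩+|22⟩)`. -/
def PsiME : Fin 3 × Fin 3 → ℂ :=
  fun q => if q.1 = q.2 then ((1 / Real.sqrt 3 : ℝ) : ℂ) else 0

/-- `ρ_ent = (3/8) P_Ψ + (1/8) Q`. -/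
def rhoEnt : Matrix (Fin 3 × Fin 3) (Fin 3 × Fin 3) ℂ :=
  (3 / 8 : ℝ) • Matrix.vecMulVec PsiME (star PsiME) + (1 / 8 : ℝ) • Qmat

/-- `|Φ_a⟩ = |2⟩ ⊗ (√((1+a)/2)|0⟩ + √((1-a)/2)|2⟩)`. -/
def PhiA (a : ℝ) : Fin 3 × Fin 3 → ℂ :=
  fun q => if q.1 = 2 then
      (if q.2 = 0 then ((Real.sqrt ((1 + a) / 2) : ℝ) : ℂ)
       else if q.2 = 2 then ((Real.sqrt ((1 - a) / 2) : ℝ) : ℂ) else 0)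
    else 0

/-- The P. Horodecki bound entangled state `ρ_a`. -/
def rhoA (a : ℝ) : Matrix (Fin 3 × Fin 3) (Fin 3 × Fin 3) ℂ :=
  (8 * a / (8 * a + 1)) • rhoEnt +
    (1 / (8 * a + 1)) • Matrix.vecMulVec (PhiA a) (star (PhiA a))

/-- The block `⟨i|ρ|j⟩` of `ρ` with respect to subsystem A, a matrix on subsystem B. -/
def blk {M N : ℕ} (ρ : Matrix (Fin M × Fin N) (Fin M × Fin N) ℂ) (i j : Fin M) :
    Matrix (Fin N) (Fin N) ℂ :=
  Matrix.of fun k l => ρ (i, k) (j, l)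

lemma blk_rhoF {M N : ℕ} (ρ : Matrix (Fin M × Fin N) (Fin M × Fin N) ℂ)
    (U : Matrix (Fin N) (Fin N) ℂ) (i j : Fin M) :
    blk (rhoF ρ U) i j = U * blk ρ i j * Uᴴ := by
  ext k l
  simp [blk, rhoF, Matrix.mul_apply, Fintype.sum_prod_type, Matrix.one_apply,
    Finset.sum_mul, ite_mul, apply_ite]

lemma trace_blocks {M N : ℕ} (D : Matrix (Fin M × Fin N) (Fin M × Fin N) ℂ) :
    (Dᴴ * D).trace.re = ∑ i, ∑ j, ∑ k, ∑ l, Complex.normSq (blk D i j k l) := by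
  have h : (Dᴴ * D).trace.re = ∑ y, ∑ x, Complex.normSq (D x y) := by
    simp [Matrix.trace, Matrix.mul_apply, Complex.normSq_apply]
  rw [h, Finset.sum_comm, Fintype.sum_prod_type]
  refine Finset.sum_congr rfl fun i _ => ?_
  simp_rw [Fintype.sum_prod_type]
  rw [Finset.sum_comm]
  rfl

lemma psi_coef : ((1 / Real.sqrt 3 : ℝ) : ℂ) * ((1 / Real.sqrt 3 : ℝ) : ℂ) = 1 / 3 := by
  rw [← Complex.ofReal_mul, div_mul_div_comm, Real.mul_self_sqrt (by norm_num)]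
  norm_num

lemma psi_entry (i j k l : Fin 3) :
    PsiME (i, k) * star (PsiME (j, l)) = if i = k ∧ j = l then 1 / 3 else 0 := by
  rw [← psi_coef]
  unfold PsiME
  dsimp only
  split_ifs <;> simp_all

/-- Off-diagonal blocks come from `P_Ψ` alone. -/
lemma blk_rhoA_off (a : ℝ) {i j : Fin 3} (hij : i ≠ j) :
    blk (rhoA a) i j = ((a / (8 * a + 1) : ℝ) : ℂ) • Matrix.single i j 1 := by
  ext k l
  have e1 := psi_entry i j k l
  have e2 : Qmat (i, k) (j, l) = 0 := by
    have h : ∀ n : Fin 3, proj3 n i j = 0 := by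
      intro n
      by_cases h1 : i = n <;> by_cases h2 : j = n <;>
        simp_all [proj3, e3, Matrix.vecMulVec_apply]
    simp [Qmat, Matrix.sub_apply, Matrix.sum_apply, h, hij]
  have e3 : PhiA a (i, k) * star (PhiA a (j, l)) = 0 := by
    by_cases h1 : i = 2 <;> by_cases h2 : j = 2 <;> simp_all [PhiA]
  simp only [blk, Matrix.of_apply, rhoA, rhoEnt, Matrix.add_apply, Matrix.smul_apply,
    Matrix.vecMulVec_apply, Pi.star_apply, e1, e2, e3, Matrix.single_apply]
  split_ifs
  · simp only [Complex.real_smul, smul_eq_mul]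
    push_cast
    ring
  · simp

lemma blk_rhoA_diag (a : ℝ) {i : Fin 3} (hi : i ≠ 2) :
    blk (rhoA a) i i = ((a / (8 * a + 1) : ℝ) : ℂ) • 1 := by
  ext k l
  have e1 := psi_entry i i k l
  have e2 : Qmat (i, k) (i, l) = if k = l ∧ i ≠ k then 1 else 0 := by
    fin_cases i <;> fin_cases k <;> fin_cases l <;>
      simp_all [Qmat, Matrix.sub_apply, Fin.sum_univ_three, proj3, e3,
        Matrix.vecMulVec_apply]
  have e3 : PhiA a (i, k) * star (PhiA a (i, l)) = 0 := by
    simp [PhiA, hi]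
  simp only [blk, Matrix.of_apply, rhoA, rhoEnt, Matrix.add_apply, Matrix.smul_apply,
    Matrix.vecMulVec_apply, Pi.star_apply, e1, e2, e3, Matrix.one_apply]
  by_cases h1 : i = k <;> by_cases h2 : k = l <;> by_cases h3 : i = l <;>
    simp_all <;> ring

lemma ptrA_rhoA (a : ℝ) (ha0 : 0 < a) (ha1 : a < 1) :
    ptrA (rhoA a) = ((1 / (8 * a + 1) : ℝ) : ℂ) •
      !![((2 * a + (1 + a) / 2 : ℝ) : ℂ), 0, ((√(1 - a ^ 2) / 2 : ℝ) : ℂ);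
        0, ((3 * a : ℝ) : ℂ), 0;
        ((√(1 - a ^ 2) / 2 : ℝ) : ℂ), 0, ((2 * a + (1 + a) / 2 : ℝ) : ℂ)] := by
  have hp : ((√((1 + a) / 2) : ℝ) : ℂ) * ((√((1 + a) / 2) : ℝ) : ℂ) = (1 + a) / 2 := by
    rw [← Complex.ofReal_mul, Real.mul_self_sqrt (by linarith)]; push_cast; rfl
  have hm : ((√((1 - a) / 2) : ℝ) : ℂ) * ((√((1 - a) / 2) : ℝ) : ℂ) = (1 - a) / 2 := by
    rw [← Complex.ofReal_mul, Real.mul_self_sqrt (by linarith)]; push_cast; rfl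
  have hc : ((√((1 + a) / 2) : ℝ) : ℂ) * ((√((1 - a) / 2) : ℝ) : ℂ) =
      ((√(1 - a ^ 2) / 2 : ℝ) : ℂ) := by
    rw [← Complex.ofReal_mul, ← Real.sqrt_mul (by linarith)]
    congr 1
    rw [show (1 + a) / 2 * ((1 - a) / 2) = (1 - a ^ 2) / 2 ^ 2 by ring,
      Real.sqrt_div' _ (by norm_num), Real.sqrt_sq (by norm_num)]
  have hblk : ∀ k l, ptrA (rhoA a) k l =
      2 * (((a / (8 * a + 1) : ℝ) : ℂ) • (1 : Matrix (Fin 3) (Fin 3) ℂ)) k l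
        + rhoA a (2, k) (2, l) := by
    intro k l
    have h0 := congrFun₂ (blk_rhoA_diag a (i := 0) (by decide)) k l
    have h1 := congrFun₂ (blk_rhoA_diag a (i := 1) (by decide)) k l
    simp only [blk, Matrix.of_apply] at h0 h1
    simp only [ptrA, Matrix.of_apply, Fin.sum_univ_three, h0, h1]
    ring
  have hQ : ∀ k l, Qmat (2, k) (2, l) = if k = 1 ∧ l = 1 then 1 else 0 := by
    intro k l
    fin_cases k <;> fin_cases l <;>
      simp [Qmat, Matrix.sub_apply, Fin.sum_univ_three, proj3, e3,
        Matrix.vecMulVec_apply]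
  have hP : ∀ k l : Fin 3, PsiME (2, k) * star (PsiME (2, l)) =
      if k = 2 ∧ l = 2 then 1 / 3 else 0 := by
    intro k l
    rw [psi_entry]
    simp only [eq_comm]
  have hF : ∀ k l : Fin 3, PhiA a (2, k) * star (PhiA a (2, l)) =
      !![((1 + a) / 2 : ℂ), 0, ((√(1 - a ^ 2) / 2 : ℝ) : ℂ); 0, 0, 0;
        ((√(1 - a ^ 2) / 2 : ℝ) : ℂ), 0, ((1 - a) / 2 : ℂ)] k l := by
    intro k l
    rw [← hp, ← hm, ← hc]
    fin_cases k <;> fin_cases l <;> simp [PhiA, mul_comm]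
  ext k l
  rw [hblk]
  simp only [rhoA, rhoEnt, Matrix.add_apply, Matrix.smul_apply,
    Matrix.vecMulVec_apply, Pi.star_apply, hQ, hP, hF]
  fin_cases k <;> fin_cases l <;> simp <;> ring

/-- With `u`, `v` the columns `i`, `j` of `U`, both of norm one, this is
`‖E_ij - u v†‖² = 2 - 2 Re(u_i conj v_j)`. -/
lemma col_sum (U : Matrix (Fin 3) (Fin 3) ℂ) (hU : U ∈ Matrix.unitaryGroup (Fin 3) ℂ)
    (i j : Fin 3) :
    ∑ k, ∑ l, Complex.normSq ((Matrix.single i j (1 : ℂ) - U * Matrix.single i j (1 : ℂ) * Uᴴ) k l) =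
      2 - 2 * (U i i * star (U j j)).re := by
  have hcol : ∀ j, ∑ k, Complex.normSq (U k j) = 1 := by
    intro j
    have h := congrFun₂ (Matrix.mem_unitaryGroup_iff'.mp hU) j j
    have h' := congrArg Complex.re h
    simpa [Matrix.mul_apply, Complex.normSq_apply] using h'
  have hent : ∀ k l, (U * Matrix.single i j (1 : ℂ) * Uᴴ) k l = U k i * star (U l j) := by
    intro k l
    simp [Matrix.mul_apply, Matrix.single_apply, ite_and, Finset.sum_ite_eq]
  have key : ∀ k l, Complex.normSq ((Matrix.single i j (1 : ℂ) - U * Matrix.single i j (1 : ℂ) * Uᴴ) k l) =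
      (if i = k then if j = l then 1 - 2 * (U k i * star (U l j)).re else 0 else 0) +
        Complex.normSq (U k i) * Complex.normSq (U l j) := by
    intro k l
    rw [Matrix.sub_apply, hent, Matrix.single_apply, Complex.normSq_sub]
    by_cases h1 : i = k <;> by_cases h2 : j = l <;> simp [h1, h2] <;> ring
  simp_rw [key, Finset.sum_add_distrib]
  rw [← Finset.sum_mul_sum, hcol, hcol]
  simp
  ring

/-- `‖ρ_a - ρ_f‖²` depends only on the diagonal of a cyclic `U`. -/
lemma trace_cyclic (a : ℝ) (U : Matrix (Fin 3) (Fin 3) ℂ)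
    (hU : U ∈ Matrix.unitaryGroup (Fin 3) ℂ) (hc : U * ptrA (rhoA a) = ptrA (rhoA a) * U) :
    ((rhoA a - rhoF (rhoA a) U)ᴴ * (rhoA a - rhoF (rhoA a) U)).trace.re =
      (a / (8 * a + 1)) ^ 2 * (12 - 4 * ((U 0 0 * star (U 1 1)).re +
        (U 0 0 * star (U 2 2)).re + (U 1 1 * star (U 2 2)).re)) := by
  have hUU : U * Uᴴ = 1 := Matrix.mem_unitaryGroup_iff.mp hU
  have hb : ∀ i j, blk (rhoA a - rhoF (rhoA a) U) i j =
      blk (rhoA a) i j - U * blk (rhoA a) i j * Uᴴ := by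
    intro i j
    rw [← blk_rhoF]; rfl
  have hcomm : ∀ i, U * blk (rhoA a) i i = blk (rhoA a) i i * U := by
    have hd : ∀ i : Fin 3, i ≠ 2 → U * blk (rhoA a) i i = blk (rhoA a) i i * U := by
      intro i hi
      rw [blk_rhoA_diag a hi]; simp
    -- The last diagonal block is `ρ_B` minus the two scalar ones.
    have h2 : blk (rhoA a) 2 2 =
        ptrA (rhoA a) - blk (rhoA a) 0 0 - blk (rhoA a) 1 1 := by
      ext k l
      simp only [blk, ptrA, Fin.sum_univ_three, Matrix.sub_apply, Matrix.of_apply]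
      ring
    intro i
    by_cases hi : i = 2
    · subst hi
      rw [h2, mul_sub, mul_sub, sub_mul, sub_mul, hc, hd 0 (by decide), hd 1 (by decide)]
    · exact hd i hi
  have hdiag : ∀ i, blk (rhoA a - rhoF (rhoA a) U) i i = 0 := by
    intro i
    rw [hb, hcomm, mul_assoc, hUU, mul_one, sub_self]
  have hoff : ∀ i j, i ≠ j →
      ∑ k, ∑ l, Complex.normSq (blk (rhoA a - rhoF (rhoA a) U) i j k l) =
        (a / (8 * a + 1)) ^ 2 * (2 - 2 * (U i i * star (U j j)).re) := by
    intro i j hij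
    rw [← col_sum U hU, hb, blk_rhoA_off a hij, Matrix.mul_smul, Matrix.smul_mul, ← smul_sub]
    simp only [Matrix.smul_apply, smul_eq_mul, Complex.normSq_mul, Complex.normSq_ofReal,
      Finset.mul_sum, sq]
  rw [trace_blocks]
  have hz : ∀ i, ∑ k, ∑ l, Complex.normSq (blk (rhoA a - rhoF (rhoA a) U) i i k l) = 0 := by
    intro i; simp [hdiag]
  rw [Fin.sum_univ_three]
  simp only [Fin.sum_univ_three (f := fun j => ∑ k, ∑ l,
    Complex.normSq (blk (rhoA a - rhoF (rhoA a) U) _ j k l))]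
  rw [hz 0, hz 1, hz 2, hoff 0 1 (by decide), hoff 0 2 (by decide), hoff 1 0 (by decide),
    hoff 1 2 (by decide), hoff 2 0 (by decide), hoff 2 1 (by decide)]
  simp only [Complex.mul_re, Complex.star_def, Complex.conj_re, Complex.conj_im]
  ring

/-- A cyclic unitary for `ρ_a` has `U₀₀ = U₂₂` and a unimodular `U₁₁`: it commutes with `ρ_B`,
which is nondegenerate with eigenvectors `|1⟩` and `(|0⟩ ± |2⟩)/√2`. -/
lemma cyclic_entries (a : ℝ) (ha0 : 0 < a) (ha1 : a < 1) (U : Matrix (Fin 3) (Fin 3) ℂ)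
    (hU : U ∈ Matrix.unitaryGroup (Fin 3) ℂ) (hc : U * ptrA (rhoA a) = ptrA (rhoA a) * U) :
    U 2 2 = U 0 0 ∧ Complex.normSq (U 1 1) = 1 := by
  have hs : ((1 / (8 * a + 1) : ℝ) : ℂ) ≠ 0 := by
    have : (1 / (8 * a + 1) : ℝ) ≠ 0 := by positivity
    exact_mod_cast this
  rw [ptrA_rhoA a ha0 ha1, Matrix.mul_smul, Matrix.smul_mul] at hc
  replace hc := smul_right_injective _ hs hc
  have hb2 : (√(1 - a ^ 2)) ^ 2 = 1 - a ^ 2 := Real.sq_sqrt (by nlinarith)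
  have hb0 : ((√(1 - a ^ 2) / 2 : ℝ) : ℂ) ≠ 0 := by
    have : (√(1 - a ^ 2) / 2 : ℝ) ≠ 0 := by
      have : 0 < √(1 - a ^ 2) := Real.sqrt_pos.mpr (by nlinarith)
      positivity
    exact_mod_cast this
  -- The determinant of `(8a+1) ρ_B - 3a` on the span of `|0⟩` and `|2⟩`.
  have hdet : (((1 - a) / 2 : ℝ) : ℂ) ^ 2 - ((√(1 - a ^ 2) / 2 : ℝ) : ℂ) ^ 2 ≠ 0 := by
    have : ((1 - a) / 2) ^ 2 - (√(1 - a ^ 2) / 2) ^ 2 ≠ 0 := by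
      rw [div_pow (√(1 - a ^ 2)), hb2]; nlinarith
    exact_mod_cast this
  have h02 := congrFun₂ hc 0 2
  have h10 := congrFun₂ hc 1 0
  have h12 := congrFun₂ hc 1 2
  simp [Matrix.mul_apply, Fin.sum_univ_three] at h02 h10 h12
  push_cast at hdet hb0
  set b : ℂ := ((√(1 - a ^ 2) : ℝ) : ℂ)
  have e10 : U 1 0 = 0 := by
    refine (mul_eq_zero.mp ?_).resolve_left hdet
    linear_combination (1 - (a : ℂ)) / 2 * h10 - b / 2 * h12
  have e12 : U 1 2 = 0 := by
    refine (mul_eq_zero.mp ?_).resolve_left hdet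
    linear_combination (1 - (a : ℂ)) / 2 * h12 - b / 2 * h10
  refine ⟨?_, ?_⟩
  · refine mul_left_cancel₀ hb0 ?_
    linear_combination -h02
  · have h := congrArg Complex.re (congrFun₂ (Matrix.mem_unitaryGroup_iff.mp hU) 1 1)
    simpa [Matrix.mul_apply, Fin.sum_univ_three, e10, e12, Complex.normSq_apply] using h

/-- Rewrites the target value as the Fu distance for `‖ρ - ρ_f‖² = 16 a² / (8a+1)²`. -/
lemma value_eq (a : ℝ) (ha0 : 0 < a) :
    (1 / Real.sqrt 2) * Real.sqrt ((a / (8 * a + 1)) ^ 2 * 16) =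
      2 * Real.sqrt 2 * a / (8 * a + 1) := by
  rw [show (a / (8 * a + 1)) ^ 2 * 16 = (4 * (a / (8 * a + 1))) ^ 2 by ring,
    Real.sqrt_sq (by positivity)]
  have h2 : Real.sqrt 2 ^ 2 = 2 := Real.sq_sqrt (by norm_num)
  have : (8 * a + 1) ≠ 0 := by positivity
  field_simp
  rw [h2]; norm_num

lemma fuDist_le_s16 (a : ℝ) (ha0 : 0 < a) (ha1 : a < 1) (U : Matrix (Fin 3) (Fin 3) ℂ)
    (hU : U ∈ Matrix.unitaryGroup (Fin 3) ℂ) (hc : U * ptrA (rhoA a) = ptrA (rhoA a) * U) :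
    fuDist (rhoA a) U ≤ 2 * Real.sqrt 2 * a / (8 * a + 1) := by
  obtain ⟨h22, h11⟩ := cyclic_entries a ha0 ha1 U hU hc
  rw [← value_eq a ha0, fuDist, trace_cyclic a U hU hc, h22]
  gcongr
  -- With `p = U₀₀` and `r = U₁₁`, the bracket is `16 - 4 |p + r|²` because `|r| = 1`.
  rw [Complex.normSq_apply] at h11
  simp only [Complex.mul_re, Complex.star_def, Complex.conj_re, Complex.conj_im]
  nlinarith [sq_nonneg ((U 0 0).re + (U 1 1).re), sq_nonneg ((U 0 0).im + (U 1 1).im)]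

lemma fuDist_diag (a : ℝ) (ha0 : 0 < a)
    (hU : (Matrix.diagonal ![1, -1, 1] : Matrix (Fin 3) (Fin 3) ℂ) ∈
      Matrix.unitaryGroup (Fin 3) ℂ)
    (hc : (Matrix.diagonal ![1, -1, 1] : Matrix (Fin 3) (Fin 3) ℂ) * ptrA (rhoA a) =
      ptrA (rhoA a) * (Matrix.diagonal ![1, -1, 1] : Matrix (Fin 3) (Fin 3) ℂ)) :
    fuDist (rhoA a) (Matrix.diagonal ![1, -1, 1]) = 2 * Real.sqrt 2 * a / (8 * a + 1) := by
  rw [← value_eq a ha0, fuDist, trace_cyclic a _ hU hc]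
  simp
  norm_num

theorem stmt16 (a : ℝ) (ha0 : 0 < a) (ha1 : a < 1) :
    dmax (rhoA a) = 2 * Real.sqrt 2 * a / (8 * a + 1) ∧
    (Matrix.diagonal ![1, -1, 1] : Matrix (Fin 3) (Fin 3) ℂ) ∈
      Matrix.unitaryGroup (Fin 3) ℂ ∧
    (Matrix.diagonal ![1, -1, 1] : Matrix (Fin 3) (Fin 3) ℂ) * ptrA (rhoA a) =
      ptrA (rhoA a) * (Matrix.diagonal ![1, -1, 1] : Matrix (Fin 3) (Fin 3) ℂ) ∧
    fuDist (rhoA a) (Matrix.diagonal ![1, -1, 1]) =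
      2 * Real.sqrt 2 * a / (8 * a + 1) := by
  have hU : (Matrix.diagonal ![1, -1, 1] : Matrix (Fin 3) (Fin 3) ℂ) ∈
      Matrix.unitaryGroup (Fin 3) ℂ := by
    rw [Matrix.mem_unitaryGroup_iff]
    ext i j
    fin_cases i <;> fin_cases j <;> simp [Matrix.star_eq_conjTranspose]
  have hc : (Matrix.diagonal ![1, -1, 1] : Matrix (Fin 3) (Fin 3) ℂ) * ptrA (rhoA a) =
      ptrA (rhoA a) * (Matrix.diagonal ![1, -1, 1] : Matrix (Fin 3) (Fin 3) ℂ) := by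
    rw [ptrA_rhoA a ha0 ha1]
    ext i j
    fin_cases i <;> fin_cases j <;> simp
  have hd := fuDist_diag a ha0 hU hc
  refine ⟨?_, hU, hc, hd⟩
  refine IsGreatest.csSup_eq ⟨⟨_, hU, hc, hd.symm⟩, ?_⟩
  rintro x ⟨U, hU', hc', rfl⟩
  exact fuDist_le_s16 a ha0 ha1 U hU' hc'
end
end

section
/- Let D = MN, let |ψ_0⟩,…,|ψ_{n−1}⟩ be orthonormal vectors in ℂ^M ⊗ ℂ^N with n < D, and let ρ = (1/(D−n))·( I_D − Σ_{k=0}^{n−1} |ψ_k⟩⟨ψ_k| ) (the state obtained from an unextendible product basis construction). Then Tr(ρ²) = 1/(D−n), and consequently d_max(ρ) ≤ √( 2n / (D·(D−n)) ). In particular, if n ≤ D²/(D+4) then d_max(ρ) ≤ 1/√2. -/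
/-!
The Frobenius norm is invariant under `A ↦ V A Vᴴ` with `V = I ⊗ U` unitary, and the maximally
mixed state `I / D` is fixed by this map. Hence `ρ - ρ_f = σ - σ_f` for the traceless part
`σ = ρ - I / D`, and the triangle inequality gives `‖ρ - ρ_f‖ ≤ 2 ‖σ‖`, where
`‖σ‖² = Tr ρ² - 1 / D`. This is the purity bound `fuDist_le`; it holds for every unitary `U`,
cyclic or not.

For the state of the theorem, `∑ |ψ_k⟩⟨ψ_k| = W Wᴴ` with `W` the isometry whose columns are
the `ψ_k`, so `I - W Wᴴ` is a Hermitian projection of trace `D - n`. This gives the purity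
`1 / (D - n)`, and `2 (1 / (D - n) - 1 / D) = 2 n / (D (D - n))`.
-/

noncomputable section
open Matrix Kronecker ComplexOrder

/-- The state `ρ = (1/(D-n)) (I - Σ_k |ψ_k⟩⟨ψ_k|)` arising from an unextendible
product basis construction, with `D = M·N`. -/
def upbRho (M N n : ℕ) (ψ : Fin n → Fin M × Fin N → ℂ) :
    Matrix (Fin M × Fin N) (Fin M × Fin N) ℂ :=
  ((1 : ℝ) / ((M * N : ℝ) - n)) •
    ((1 : Matrix (Fin M × Fin N) (Fin M × Fin N) ℂ) -
      ∑ k, Matrix.vecMulVec (ψ k) (star (ψ k)))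

/-- In Frobenius norms, `‖A - V A Vᴴ‖ ≤ ‖A‖ + ‖V A Vᴴ‖ = 2 ‖A‖`; here in squared form, via the
parallelogram law. -/
lemma frob_sub_conj_le {ι : Type*} [Fintype ι] [DecidableEq ι] (A V : Matrix ι ι ℂ)
    (hV : Vᴴ * V = 1) :
    ((A - V * A * Vᴴ)ᴴ * (A - V * A * Vᴴ)).trace.re ≤ 4 * (Aᴴ * A).trace.re := by
  set B := V * A * Vᴴ with hB
  have hBB : (Bᴴ * B).trace = (Aᴴ * A).trace := by
    have : Bᴴ * B = V * (Aᴴ * A) * Vᴴ := by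
      calc Bᴴ * B = V * Aᴴ * (Vᴴ * V) * A * Vᴴ := by
            simp only [hB, conjTranspose_mul, conjTranspose_conjTranspose, Matrix.mul_assoc]
        _ = _ := by rw [hV]; simp only [Matrix.mul_one, Matrix.mul_assoc]
    rw [this, Matrix.trace_mul_comm, ← Matrix.mul_assoc, hV, Matrix.one_mul]
  have hpos : 0 ≤ ((A + B)ᴴ * (A + B)).trace.re :=
    (Complex.le_def.1 (posSemidef_conjTranspose_mul_self (A + B)).trace_nonneg).1
  have hpar : ((A - B)ᴴ * (A - B)).trace + ((A + B)ᴴ * (A + B)).trace =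
      2 * (Aᴴ * A).trace + 2 * (Bᴴ * B).trace := by
    simp only [conjTranspose_sub, conjTranspose_add, Matrix.sub_mul, Matrix.mul_sub,
      Matrix.add_mul, Matrix.mul_add, trace_add, trace_sub]
    ring
  have h := congrArg Complex.re hpar
  rw [hBB] at h
  have h2 : (2 : ℂ) = ((2 : ℝ) : ℂ) := by norm_num
  rw [h2, Complex.add_re, Complex.add_re, Complex.re_ofReal_mul] at h
  linarith

/-- The purity bound, for a Hermitian matrix of trace one and an arbitrary unitary. -/
lemma fuDist_le_s19 {M N : ℕ} (hD : 0 < M * N)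
    (ρ : Matrix (Fin M × Fin N) (Fin M × Fin N) ℂ) (hH : ρᴴ = ρ) (htr : ρ.trace = 1)
    (U : Matrix (Fin N) (Fin N) ℂ) (hU : U ∈ Matrix.unitaryGroup (Fin N) ℂ) :
    fuDist ρ U ≤ Real.sqrt (2 * ((ρ * ρ).trace.re - 1 / (M * N : ℝ))) := by
  set V := (1 : Matrix (Fin M) (Fin M) ℂ) ⊗ₖ U with hV
  have hUl : Uᴴ * U = 1 := Matrix.mem_unitaryGroup_iff'.1 hU
  have hUr : U * Uᴴ = 1 := Matrix.mem_unitaryGroup_iff.1 hU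
  have hVl : Vᴴ * V = 1 := by
    rw [hV, conjTranspose_kronecker, ← mul_kronecker_mul, hUl]; simp
  have hVr : V * Vᴴ = 1 := by
    rw [hV, conjTranspose_kronecker, ← mul_kronecker_mul, hUr]; simp
  have hDR : (0 : ℝ) < M * N := by exact_mod_cast hD
  have hDC : (M * N : ℂ) ≠ 0 := by exact_mod_cast hD.ne'
  set c : ℂ := 1 / (M * N : ℂ) with hc
  have hcs : star c = c := by simp [hc]
  set σ := ρ - c • (1 : Matrix (Fin M × Fin N) (Fin M × Fin N) ℂ) with hσ
  have hsub : ρ - rhoF ρ U = σ - V * σ * Vᴴ := by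
    rw [rhoF, ← hV, hσ, Matrix.mul_sub, Matrix.sub_mul, Matrix.mul_smul, Matrix.mul_one,
      Matrix.smul_mul, hVr]
    abel
  have hσn : (σᴴ * σ).trace = (ρ * ρ).trace - c := by
    have : σᴴ = σ := by rw [hσ, conjTranspose_sub, hH, conjTranspose_smul, hcs]; simp
    rw [this, hσ]
    simp only [Matrix.mul_sub, Matrix.sub_mul, Matrix.mul_smul, Matrix.mul_one,
      Matrix.smul_mul, Matrix.one_mul, trace_sub, trace_smul, htr, trace_one, smul_eq_mul,
      Fintype.card_prod, Fintype.card_fin, Nat.cast_mul]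
    have hcD : c * (M * N) = 1 := by rw [hc, one_div, inv_mul_cancel₀ hDC]
    linear_combination c * hcD
  have hmain := frob_sub_conj_le σ V hVl
  rw [← hsub, hσn] at hmain
  have hcre : c.re = 1 / (M * N : ℝ) := by
    have : c = ((1 / (M * N : ℝ) : ℝ) : ℂ) := by rw [hc]; push_cast; rfl
    rw [this, Complex.ofReal_re]
  rw [Complex.sub_re, hcre] at hmain
  rw [fuDist, one_div, ← Real.sqrt_inv, ← Real.sqrt_mul (by positivity)]
  apply Real.sqrt_le_sqrt
  linarith

/-- `∑ |ψ_k⟩⟨ψ_k|` is a Hermitian idempotent of trace `n`. -/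
lemma sum_proj {ι : Type*} [Fintype ι] [DecidableEq ι] {n : ℕ} (ψ : Fin n → ι → ℂ)
    (horth : ∀ k l, (∑ x, (starRingEnd ℂ) (ψ k x) * ψ l x) = if k = l then 1 else 0) :
    (∑ k, vecMulVec (ψ k) (star (ψ k)))ᴴ = ∑ k, vecMulVec (ψ k) (star (ψ k)) ∧
    (∑ k, vecMulVec (ψ k) (star (ψ k))) * (∑ k, vecMulVec (ψ k) (star (ψ k))) =
      ∑ k, vecMulVec (ψ k) (star (ψ k)) ∧
    (∑ k, vecMulVec (ψ k) (star (ψ k))).trace = n := by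
  set W : Matrix ι (Fin n) ℂ := Matrix.of fun x k => ψ k x with hW
  have hP : ∑ k, vecMulVec (ψ k) (star (ψ k)) = W * Wᴴ := by
    ext x y
    simp [Matrix.sum_apply, Matrix.mul_apply, vecMulVec_apply, hW]
  have hWW : Wᴴ * W = 1 := by
    ext k l
    rw [Matrix.one_apply, ← horth k l]
    simp [Matrix.mul_apply, hW]
  rw [hP]
  refine ⟨by simp, ?_, ?_⟩
  · rw [Matrix.mul_assoc, ← Matrix.mul_assoc Wᴴ, hWW, Matrix.one_mul]
  · rw [Matrix.trace_mul_comm, hWW]; simp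

theorem stmt19 {M N n : ℕ} (hn : n < M * N)
    (ψ : Fin n → Fin M × Fin N → ℂ)
    (horth : ∀ k l, (∑ x, (starRingEnd ℂ) (ψ k x) * ψ l x) =
      if k = l then 1 else 0) :
    ((upbRho M N n ψ * upbRho M N n ψ).trace).re = 1 / ((M * N : ℝ) - n) ∧
    dmax (upbRho M N n ψ) ≤
      Real.sqrt (2 * n / ((M * N : ℝ) * ((M * N : ℝ) - n))) ∧
    ((n : ℝ) ≤ (M * N : ℝ) ^ 2 / ((M * N : ℝ) + 4) →
      dmax (upbRho M N n ψ) ≤ 1 / Real.sqrt 2) := by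
  obtain ⟨hPH, hPP, hPt⟩ := sum_proj ψ horth
  have hnR : (n : ℝ) < M * N := by exact_mod_cast hn
  have hD0 : 0 < M * N := by omega
  have hDR : (0 : ℝ) < M * N := by exact_mod_cast hD0
  have hd : (0 : ℝ) < M * N - n := by linarith
  have hdC : (M * N - n : ℂ) ≠ 0 := by exact_mod_cast hd.ne'
  have hH : (upbRho M N n ψ)ᴴ = upbRho M N n ψ := by
    rw [upbRho, conjTranspose_smul, conjTranspose_sub, hPH]; simp
  have htr : (upbRho M N n ψ).trace = 1 := by
    rw [upbRho, trace_smul, trace_sub, hPt, Complex.real_smul]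
    simp only [trace_one, Fintype.card_prod, Fintype.card_fin]
    push_cast
    field_simp
  have hsq : upbRho M N n ψ * upbRho M N n ψ =
      ((1 : ℝ) / ((M * N : ℝ) - n)) • upbRho M N n ψ := by
    simp only [upbRho, Matrix.smul_mul, Matrix.mul_smul, Matrix.sub_mul, Matrix.mul_sub,
      Matrix.one_mul, Matrix.mul_one, hPP, sub_self, smul_zero, sub_zero]
  have hpur : ((upbRho M N n ψ * upbRho M N n ψ).trace).re = 1 / ((M * N : ℝ) - n) := by
    rw [hsq, trace_smul, htr, Complex.real_smul, mul_one, Complex.ofReal_re]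
  have hmax : dmax (upbRho M N n ψ) ≤
      Real.sqrt (2 * n / ((M * N : ℝ) * ((M * N : ℝ) - n))) := by
    refine Real.sSup_le ?_ (Real.sqrt_nonneg _)
    rintro x ⟨U, hU, -, rfl⟩
    refine (fuDist_le_s19 hD0 _ hH htr U hU).trans (le_of_eq ?_)
    rw [hpur, div_sub_div _ _ hd.ne' hDR.ne']
    congr 1
    rw [mul_comm (M * N : ℝ) (M * N - n : ℝ), ← mul_div_assoc]
    congr 1
    ring
  refine ⟨hpur, hmax, fun h => hmax.trans ?_⟩
  rw [one_div, ← Real.sqrt_inv]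
  apply Real.sqrt_le_sqrt
  rw [le_div_iff₀ (by linarith)] at h
  rw [div_le_iff₀ (by positivity)]
  linarith
end
end
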